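/- Fix real k₁ > 0 and k₂ > 0, and set ρ = k₁ + 2k₂ and k = k₁ + k₂. For λ ≥ 0 and t ≥ 0 define I(λ, t) = ∫₀¹ ∫₀^π (cosh²t + 2 r cos φ sinh t cosh t + r² sinh²t)^((λ−ρ)/2) (1−r²)^(k₁−1) r^(2k₂) (sin φ)^(2k₂−1) dφ dr. Then there exist constants C₁, C₂ > 0 depending only on k₁ and k₂ such that for all λ ≥ 0 and t ≥ 0, C₁ B ≤ I(λ, t) ≤ C₂ B, where B = e^((λ−ρ)t) · (1+t)/(1+λt)^k · ((1+λ(1+t))/(1+λ))^(k−1). -/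

import Mathlib

open MeasureTheory Real

/-- Koornwinder's integral representation (up to a constant) of the
Heckman–Opdam hypergeometric function for the root system `BC₁`. -/
noncomputable def bcIntegral (k₁ k₂ l t : ℝ) : ℝ :=
  ∫ r in (0:ℝ)..1, ∫ φ in (0:ℝ)..Real.pi,
    (Real.cosh t ^ 2 + 2 * r * Real.cos φ * Real.sinh t * Real.cosh t +
        r ^ 2 * Real.sinh t ^ 2) ^ ((l - (k₁ + 2 * k₂)) / 2) *
      (1 - r ^ 2) ^ (k₁ - 1) * r ^ (2 * k₂) * Real.sin φ ^ (2 * k₂ - 1)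


namespace BC

/-- normalized base -/
noncomputable def G (e a c : ℝ) : ℝ :=
  ((1 + e) / 2) ^ 2 + 2 * (1 - a) * c * ((1 - e) / 2) * ((1 + e) / 2) +
    (1 - a) ^ 2 * ((1 - e) / 2) ^ 2

noncomputable def V (k₁ k₂ a : ℝ) : ℝ := (1 - (1 - a) ^ 2) ^ (k₁ - 1) * (1 - a) ^ (2 * k₂)

noncomputable def Jin (k₂ q e a : ℝ) : ℝ :=
  ∫ φ in (0:ℝ)..Real.pi, G e a (Real.cos φ) ^ q * Real.sin φ ^ (2 * k₂ - 1)

noncomputable def Jh (k₂ q e s a : ℝ) : ℝ :=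
  ∫ φ in (0:ℝ)..(Real.pi / 2), G e a (s * Real.cos φ) ^ q * Real.sin φ ^ (2 * k₂ - 1)

lemma base_eq (t r c : ℝ) :
    Real.cosh t ^ 2 + 2 * r * c * Real.sinh t * Real.cosh t + r ^ 2 * Real.sinh t ^ 2
      = Real.exp (2 * t) * G (Real.exp (-2 * t)) (1 - r) c := by
  have h1 : Real.exp (2 * t) = Real.exp t ^ 2 := by rw [← Real.exp_nat_mul]; norm_num
  have h2 : Real.exp (-2 * t) = Real.exp (-t) ^ 2 := by
    rw [← Real.exp_nat_mul]; congr 1; push_cast; ring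
  have h3 : Real.exp t * Real.exp (-t) = 1 := by rw [← Real.exp_add]; simp
  have hc : Real.cosh t = Real.exp t * ((1 + Real.exp (-2 * t)) / 2) := by
    rw [Real.cosh_eq, h2]; linear_combination (-Real.exp (-t) / 2) * h3
  have hs : Real.sinh t = Real.exp t * ((1 - Real.exp (-2 * t)) / 2) := by
    rw [Real.sinh_eq, h2]; linear_combination (Real.exp (-t) / 2) * h3
  rw [hc, hs, h1, G]; ring

lemma G_sub (e a c : ℝ) : 1 - G e a c = 2 * ((1 + e) / 2) * ((1 - e) / 2) * (1 - (1 - a) * c)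
    + ((1 - e) / 2) ^ 2 * (1 - (1 - a) ^ 2) := by
  rw [G]; ring

lemma G_low (e a c : ℝ) : G e a c = (e + a * ((1 - e) / 2)) ^ 2
    + 2 * (1 - a) * ((1 - e) / 2) * ((1 + e) / 2) * (1 + c) := by
  rw [G]; ring

variable {e a c : ℝ}

lemma G_le_one (he : 0 < e) (he1 : e ≤ 1) (ha : 0 ≤ a) (ha1 : a ≤ 1) (hc1 : c ≤ 1) :
    G e a c ≤ 1 := by
  have h := G_sub e a c
  have h1 : 0 ≤ 1 - (1 - a) * c := by nlinarith
  have h2 : 0 ≤ 1 - (1 - a) ^ 2 := by nlinarith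
  have h3 : 0 ≤ (1 - e) / 2 := by linarith
  have : 0 ≤ 1 - G e a c := by rw [h]; positivity
  linarith

lemma G_ge_sq (he : 0 < e) (he1 : e ≤ 1) (ha : 0 ≤ a) (ha1 : a ≤ 1) (hc0 : -1 ≤ c) :
    (e + a * ((1 - e) / 2)) ^ 2 ≤ G e a c := by
  rw [G_low]
  have h1 : 0 ≤ 1 - a := by linarith
  have h2 : 0 ≤ 1 + c := by linarith
  have h3 : 0 ≤ (1 - e) / 2 := by linarith
  have : 0 ≤ 2 * (1 - a) * ((1 - e) / 2) * ((1 + e) / 2) * (1 + c) := by positivity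
  linarith

lemma G_ge_e (he : 0 < e) (he1 : e ≤ 1) (ha : 0 ≤ a) (ha1 : a ≤ 1) (hc0 : -1 ≤ c) :
    e ^ 2 ≤ G e a c := by
  refine le_trans ?_ (G_ge_sq he he1 ha ha1 hc0)
  have h3 : 0 ≤ (1 - e) / 2 := by linarith
  have : 0 ≤ a * ((1 - e) / 2) := by positivity
  gcongr; linarith

lemma G_pos (he : 0 < e) (he1 : e ≤ 1) (ha : 0 ≤ a) (ha1 : a ≤ 1) (hc0 : -1 ≤ c) :
    0 < G e a c := lt_of_lt_of_le (by positivity) (G_ge_e he he1 ha ha1 hc0)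

lemma G_ge_quarter (he : 0 < e) (he1 : e ≤ 1) (ha1 : a ≤ 1) (hc0 : 0 ≤ c) :
    1 / 4 ≤ G e a c := by
  rw [G]
  have h1 : 0 ≤ 1 - a := by linarith
  have h3 : 0 ≤ (1 - e) / 2 := by linarith
  have : 0 ≤ 2 * (1 - a) * c * ((1 - e) / 2) * ((1 + e) / 2) := by positivity
  nlinarith [sq_nonneg ((1 - a) * ((1 - e) / 2))]

lemma G_sub_le (he : 0 < e) (he1 : e ≤ 1) (ha : 0 ≤ a) (ha1 : a ≤ 1) (hc1 : c ≤ 1) :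
    1 - G e a c ≤ 4 * ((1 - e) / 2) * (a + (1 - c)) := by
  rw [G_sub]
  have h3 : 0 ≤ (1 - e) / 2 := by linarith
  have h1 : 1 - (1 - a) * c ≤ a + (1 - c) := by nlinarith
  have h0 : 0 ≤ 1 - (1 - a) * c := by nlinarith
  have h2 : 1 - (1 - a) ^ 2 ≤ 2 * (a + (1 - c)) := by nlinarith
  have h2' : 0 ≤ 1 - (1 - a) ^ 2 := by nlinarith
  have e1 : 2 * ((1 + e) / 2) * ((1 - e) / 2) * (1 - (1 - a) * c)
      ≤ 2 * ((1 - e) / 2) * (a + (1 - c)) := by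
    calc _ = (2 * ((1 - e) / 2)) * (((1 + e) / 2) * (1 - (1 - a) * c)) := by ring
      _ ≤ (2 * ((1 - e) / 2)) * (1 * (a + (1 - c))) := by gcongr; linarith
      _ = _ := by ring
  have e2 : ((1 - e) / 2) ^ 2 * (1 - (1 - a) ^ 2) ≤ 2 * ((1 - e) / 2) * (a + (1 - c)) := by
    calc _ = ((1 - e) / 2) * (((1 - e) / 2) * (1 - (1 - a) ^ 2)) := by ring
      _ ≤ ((1 - e) / 2) * (1 * (2 * (a + (1 - c)))) := by gcongr; linarith
      _ = _ := by ring
  linarith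

lemma G_sub_ge (he : 0 < e) (he1 : e ≤ 1) (ha : 0 ≤ a) (ha1 : a ≤ 1) (hc1 : c ≤ 1) (hc0 : 0 ≤ c) :
    ((1 - e) / 2) * (a + (1 - c)) / 2 ≤ 1 - G e a c := by
  rw [G_sub]
  have h3 : 0 ≤ (1 - e) / 2 := by linarith
  have h1 : (a + (1 - c)) / 2 ≤ 1 - (1 - a) * c := by nlinarith
  have h0 : 0 ≤ 1 - (1 - a) * c := by nlinarith
  have h2' : 0 ≤ 1 - (1 - a) ^ 2 := by nlinarith
  have : 0 ≤ ((1 - e) / 2) ^ 2 * (1 - (1 - a) ^ 2) := by positivity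
  have : ((1 - e) / 2) * (a + (1 - c)) / 2 ≤ 2 * ((1 + e) / 2) * ((1 - e) / 2) * (1 - (1 - a) * c) := by
    calc _ = 1 * ((1 - e) / 2) * ((a + (1 - c)) / 2) := by ring
      _ ≤ 2 * ((1 + e) / 2) * ((1 - e) / 2) * (1 - (1 - a) * c) := by gcongr; linarith
  linarith

lemma one_sub_cos_ge {φ : ℝ} (h0 : 0 ≤ φ) (h1 : φ ≤ Real.pi / 2) : φ ^ 2 / 8 ≤ 1 - Real.cos φ := by
  have hp := Real.pi_pos
  have h := Real.cos_le_one_sub_mul_cos_sq (x := φ) (by rw [abs_of_nonneg h0]; linarith)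
  have h4 := Real.pi_le_four
  have : (1:ℝ) / 8 ≤ 2 / Real.pi ^ 2 := by
    rw [div_le_div_iff₀ (by norm_num) (by positivity)]; nlinarith
  nlinarith [sq_nonneg φ]

lemma one_sub_cos_le (φ : ℝ) : 1 - Real.cos φ ≤ φ ^ 2 / 2 := by
  linarith [Real.one_sub_sq_div_two_le_cos (x := φ)]

lemma Gm_ge (he : 0 < e) (he1 : e ≤ 1) (ha : 0 ≤ a) (ha1 : a ≤ 1) {φ : ℝ}
    (h0 : 0 ≤ φ) (h1 : φ ≤ Real.pi / 2) :
    ((e + a + φ) / 32) ^ 2 ≤ G e a (-1 * Real.cos φ) := by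
  have hφ2 : φ ≤ 2 := by linarith [Real.pi_le_four]
  have hc : -1 ≤ -1 * Real.cos φ := by linarith [Real.cos_le_one φ]
  rcases le_total (1 / 8) e with h8 | h8
  · refine le_trans ?_ (G_ge_e he he1 ha ha1 hc)
    gcongr; linarith
  rcases le_total (1 / 2) a with h2 | h2
  · refine le_trans ?_ (G_ge_sq he he1 ha ha1 hc)
    gcongr; nlinarith
  · rw [G_low]
    have hb := one_sub_cos_ge h0 h1
    have e1 : (7 / 16 * (e + a)) ^ 2 ≤ (e + a * ((1 - e) / 2)) ^ 2 := by gcongr; nlinarith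
    have e2 : 2 * (1 / 2) * (7 / 16) * (1 / 2) * (φ ^ 2 / 8) ≤
        2 * (1 - a) * ((1 - e) / 2) * ((1 + e) / 2) * (1 + -1 * Real.cos φ) := by
      have hb' : φ ^ 2 / 8 ≤ 1 + -1 * Real.cos φ := by linarith
      have u1 : 1 / 2 ≤ 1 - a := by linarith
      have u2 : 7 / 16 ≤ (1 - e) / 2 := by linarith
      have u3 : 1 / 2 ≤ (1 + e) / 2 := by linarith
      exact mul_le_mul (mul_le_mul (mul_le_mul (by linarith) u2 (by norm_num) (by linarith)) u3
        (by norm_num) (mul_nonneg (by linarith) (by linarith))) hb' (by positivity)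
        (mul_nonneg (mul_nonneg (by linarith) (by linarith)) (by linarith))
    nlinarith [sq_nonneg (e + a - φ), sq_nonneg φ, sq_nonneg (e + a)]

lemma rpow_cmp {κ x y : ℝ} (m : ℝ) (hκ : 0 < κ) (hκ1 : κ ≤ 1) (hy : 0 < y) (h1 : κ * y ≤ x)
    (h2 : x ≤ y) : κ ^ |m| * y ^ m ≤ x ^ m ∧ x ^ m ≤ κ ^ (-|m|) * y ^ m := by
  have hx : 0 < x := lt_of_lt_of_le (by positivity) h1
  rcases le_total 0 m with hm | hm
  · rw [abs_of_nonneg hm]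
    constructor
    · rw [← Real.mul_rpow hκ.le hy.le]; exact Real.rpow_le_rpow (by positivity) h1 hm
    · have : 1 ≤ κ ^ (-m) := Real.one_le_rpow_of_pos_of_le_one_of_nonpos hκ hκ1 (by linarith)
      have h3 : x ^ m ≤ y ^ m := Real.rpow_le_rpow hx.le h2 hm
      have : 0 ≤ y ^ m := by positivity
      nlinarith
  · rw [abs_of_nonpos hm]
    constructor
    · have h3 : y ^ m ≤ x ^ m := Real.rpow_le_rpow_of_nonpos hx h2 hm
      have : κ ^ (-m) ≤ 1 := Real.rpow_le_one hκ.le hκ1 (by linarith)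
      have : 0 ≤ y ^ m := by positivity
      nlinarith
    · rw [neg_neg, ← Real.mul_rpow hκ.le hy.le]
      exact Real.rpow_le_rpow_of_nonpos (by positivity) h1 hm

lemma sin_cmp (m : ℝ) {φ : ℝ} (h0 : 0 < φ) (h1 : φ ≤ Real.pi / 2) :
    (1 / 2 : ℝ) ^ |m| * φ ^ m ≤ Real.sin φ ^ m ∧ Real.sin φ ^ m ≤ (1 / 2 : ℝ) ^ (-|m|) * φ ^ m := by
  refine rpow_cmp m (by norm_num) (by norm_num) h0 ?_ (Real.sin_le h0.le)
  refine le_trans ?_ (Real.mul_le_sin h0.le h1)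
  have : (1:ℝ) / 2 ≤ 2 / Real.pi := by
    rw [div_le_div_iff₀ (by norm_num) Real.pi_pos]; linarith [Real.pi_le_four]
  gcongr

lemma sin_int_half {m : ℝ} (hm : -1 < m) :
    IntervalIntegrable (fun φ => Real.sin φ ^ m) volume 0 (Real.pi / 2) := by
  have h := (intervalIntegral.intervalIntegrable_rpow' (a := 0) (b := Real.pi / 2) hm).const_mul
    ((1 / 2 : ℝ) ^ (-|m|))
  refine h.mono_fun' (Measurable.aestronglyMeasurable (by fun_prop)) ?_
  rw [Set.uIoc_of_le (by positivity)]
  refine (ae_restrict_iff' measurableSet_Ioc).2 (Filter.Eventually.of_forall fun φ hφ => ?_)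
  have hs : 0 ≤ Real.sin φ := Real.sin_nonneg_of_nonneg_of_le_pi hφ.1.le (by linarith [hφ.2, Real.pi_pos])
  simp only
  rw [Real.norm_of_nonneg (by positivity)]
  exact (sin_cmp m hφ.1 hφ.2).2

lemma sin_int {m : ℝ} (hm : -1 < m) :
    IntervalIntegrable (fun φ => Real.sin φ ^ m) volume 0 Real.pi := by
  have h := sin_int_half hm
  refine h.trans ?_
  have h2 := (h.comp_sub_left Real.pi).symm
  simp only [Real.sin_pi_sub, sub_zero] at h2
  convert h2 using 1
  ring

lemma G_rpow_bdd (q : ℝ) (he : 0 < e) (he1 : e ≤ 1) (ha : 0 ≤ a) (ha1 : a ≤ 1) (hc0 : -1 ≤ c)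
    (hc1 : c ≤ 1) : G e a c ^ q ≤ 1 + (e ^ 2) ^ q := by
  have hG := G_pos he he1 ha ha1 hc0
  have : 0 ≤ (e ^ 2) ^ q := by positivity
  rcases le_total 0 q with hq | hq
  · have := Real.rpow_le_one hG.le (G_le_one he he1 ha ha1 hc1) hq
    linarith
  · have := Real.rpow_le_rpow_of_nonpos (by positivity) (G_ge_e he he1 ha ha1 hc0) hq
    linarith

lemma meas_G (q k₂ s : ℝ) : Measurable (fun p : ℝ × ℝ =>
    G e p.1 (s * Real.cos p.2) ^ q * Real.sin p.2 ^ (2 * k₂ - 1)) := by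
  unfold G; fun_prop

lemma int_G {q k₂ s L : ℝ} (hk : 0 < k₂) (hs : |s| ≤ 1) (he : 0 < e) (he1 : e ≤ 1) (ha : 0 ≤ a)
    (ha1 : a ≤ 1) (hL0 : 0 ≤ L) (hL : L ≤ Real.pi) :
    IntervalIntegrable (fun φ => G e a (s * Real.cos φ) ^ q * Real.sin φ ^ (2 * k₂ - 1))
      volume 0 L := by
  have h := ((sin_int (m := 2 * k₂ - 1) (by linarith)).const_mul (1 + (e ^ 2) ^ q)).mono_set
    (c := 0) (d := L) (by
      rw [Set.uIcc_of_le hL0, Set.uIcc_of_le Real.pi_pos.le]; exact Set.Icc_subset_Icc le_rfl hL)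
  refine h.mono_fun' ?_ ?_
  · exact ((meas_G q k₂ s).comp (measurable_const.prodMk measurable_id)).aestronglyMeasurable
  rw [Set.uIoc_of_le hL0]
  refine (ae_restrict_iff' measurableSet_Ioc).2 (Filter.Eventually.of_forall fun φ hφ => ?_)
  have hsn : 0 ≤ Real.sin φ := Real.sin_nonneg_of_nonneg_of_le_pi hφ.1.le (hφ.2.trans hL)
  have hc : |s * Real.cos φ| ≤ 1 := by
    rw [abs_mul]; exact mul_le_one₀ hs (abs_nonneg _) (Real.abs_cos_le_one φ)
  have hc' := abs_le.1 hc
  have hG := G_pos he he1 ha ha1 hc'.1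
  simp only
  rw [Real.norm_of_nonneg (by positivity)]
  gcongr
  exact G_rpow_bdd q he he1 ha ha1 hc'.1 hc'.2

lemma Jin_split {q k₂ : ℝ} (hk : 0 < k₂) (he : 0 < e) (he1 : e ≤ 1) (ha : 0 ≤ a) (ha1 : a ≤ 1) :
    Jin k₂ q e a = Jh k₂ q e 1 a + Jh k₂ q e (-1) a := by
  have hp := Real.pi_pos
  have h := int_G (q := q) (s := 1) hk (by norm_num) he he1 ha ha1 Real.pi_pos.le le_rfl
  have h1 := int_G (q := q) (s := 1) (L := Real.pi / 2) hk (by norm_num) he he1 ha ha1 (by linarith) (by linarith)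
  have h2 := h1.symm.trans h
  unfold Jin Jh
  simp only [one_mul] at *
  rw [← intervalIntegral.integral_add_adjacent_intervals h1 h2]
  congr 1
  have := intervalIntegral.integral_comp_sub_left (a := 0) (b := Real.pi / 2)
    (fun φ => G e a (Real.cos φ) ^ q * Real.sin φ ^ (2 * k₂ - 1)) Real.pi
  simp only [Real.cos_pi_sub, Real.sin_pi_sub, sub_zero] at this
  rw [show Real.pi - Real.pi / 2 = Real.pi / 2 by ring] at this
  rw [← this]
  simp

lemma Jh_nonneg {q k₂ s : ℝ} (hs : |s| ≤ 1) (he : 0 < e) (he1 : e ≤ 1)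
    (ha : 0 ≤ a) (ha1 : a ≤ 1) : 0 ≤ Jh k₂ q e s a := by
  have hp := Real.pi_pos
  refine intervalIntegral.integral_nonneg (by positivity) fun φ hφ => ?_
  have hsn : 0 ≤ Real.sin φ := Real.sin_nonneg_of_nonneg_of_le_pi hφ.1 (by linarith [hφ.2])
  have hc : |s * Real.cos φ| ≤ 1 := by
    rw [abs_mul]; exact mul_le_one₀ hs (abs_nonneg _) (Real.abs_cos_le_one φ)
  have hG := G_pos he he1 ha ha1 (abs_le.1 hc).1
  positivity

lemma V_nonneg {k₁ k₂ : ℝ} (ha : 0 ≤ a) (ha1 : a ≤ 1) : 0 ≤ V k₁ k₂ a := by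
  have h2 : 0 ≤ 1 - (1 - a) ^ 2 := by nlinarith
  have : 0 ≤ 1 - a := by linarith
  unfold V; positivity

lemma V_eq {k₁ k₂ : ℝ} (ha : 0 ≤ a) (ha1 : a ≤ 1) :
    V k₁ k₂ a = a ^ (k₁ - 1) * ((2 - a) ^ (k₁ - 1) * (1 - a) ^ (2 * k₂)) := by
  unfold V
  rw [show 1 - (1 - a) ^ 2 = a * (2 - a) by ring, Real.mul_rpow ha (by linarith), mul_assoc]

lemma V_le {k₁ k₂ : ℝ} (hk₁ : 0 < k₁) (hk₂ : 0 < k₂) (ha : 0 ≤ a) (ha1 : a ≤ 1) :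
    V k₁ k₂ a ≤ 2 ^ k₁ * a ^ (k₁ - 1) := by
  rw [V_eq ha ha1, mul_comm]
  have h1 : (2 - a) ^ (k₁ - 1) ≤ 2 ^ k₁ := by
    calc (2 - a) ^ (k₁ - 1) ≤ (2 - a) ^ k₁ := Real.rpow_le_rpow_of_exponent_le (by linarith) (by linarith)
      _ ≤ 2 ^ k₁ := Real.rpow_le_rpow (by linarith) (by linarith) hk₁.le
  have h2 : (1 - a) ^ (2 * k₂) ≤ 1 := Real.rpow_le_one (by linarith) (by linarith) (by linarith)
  have h3 : 0 ≤ (1 - a) ^ (2 * k₂) := Real.rpow_nonneg (by linarith) _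
  gcongr
  calc (2 - a) ^ (k₁ - 1) * (1 - a) ^ (2 * k₂) ≤ 2 ^ k₁ * 1 := by gcongr
    _ = _ := mul_one _

lemma V_ge {k₁ k₂ : ℝ} (hk₁ : 0 < k₁) (hk₂ : 0 < k₂) (ha : 0 ≤ a) (ha1 : a ≤ 1 / 2) :
    (1 / 2 * (1 / 2) ^ (2 * k₂)) * a ^ (k₁ - 1) ≤ V k₁ k₂ a := by
  rw [V_eq ha (by linarith), mul_comm]
  have h1 : 1 / 2 ≤ (2 - a) ^ (k₁ - 1) := by
    calc (1:ℝ) / 2 = 2 ^ (-1 : ℝ) := by rw [Real.rpow_neg_one]; norm_num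
      _ ≤ (2 - a) ^ (-1 : ℝ) := Real.rpow_le_rpow_of_nonpos (by linarith) (by linarith) (by norm_num)
      _ ≤ (2 - a) ^ (k₁ - 1) := Real.rpow_le_rpow_of_exponent_le (by linarith) (by linarith)
  have h2 : (1 / 2 : ℝ) ^ (2 * k₂) ≤ (1 - a) ^ (2 * k₂) :=
    Real.rpow_le_rpow (by norm_num) (by linarith) (by linarith)
  gcongr

lemma Jh_meas (k₂ q s : ℝ) : Measurable (fun a => Jh k₂ q e s a) := by
  have hp := Real.pi_pos
  unfold Jh
  simp only [intervalIntegral.integral_of_le (show (0:ℝ) ≤ Real.pi / 2 by positivity)]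
  exact ((meas_G (e := e) q k₂ s).stronglyMeasurable.integral_prod_right').measurable

lemma Jh_le {q k₂ s : ℝ} (hk : 0 < k₂) (hs : |s| ≤ 1) (he : 0 < e) (he1 : e ≤ 1)
    (ha : 0 ≤ a) (ha1 : a ≤ 1) :
    Jh k₂ q e s a ≤ (1 + (e ^ 2) ^ q) * ∫ φ in (0:ℝ)..(Real.pi / 2), Real.sin φ ^ (2 * k₂ - 1) := by
  have hp := Real.pi_pos
  rw [← intervalIntegral.integral_const_mul]
  refine intervalIntegral.integral_mono_on (by positivity)
    (int_G hk hs he he1 ha ha1 (by positivity) (by linarith))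
    ((sin_int_half (by linarith)).const_mul _) fun φ hφ => ?_
  have hsn : 0 ≤ Real.sin φ := Real.sin_nonneg_of_nonneg_of_le_pi hφ.1 (by linarith [hφ.2])
  have hc : |s * Real.cos φ| ≤ 1 := by
    rw [abs_mul]; exact mul_le_one₀ hs (abs_nonneg _) (Real.abs_cos_le_one φ)
  gcongr
  exact G_rpow_bdd q he he1 ha ha1 (abs_le.1 hc).1 (abs_le.1 hc).2

lemma VJh_int {k₁ k₂ q s : ℝ} (hk₁ : 0 < k₁) (hk : 0 < k₂) (hs : |s| ≤ 1) (he : 0 < e) (he1 : e ≤ 1) :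
    IntervalIntegrable (fun a => V k₁ k₂ a * Jh k₂ q e s a) volume 0 1 := by
  set M := (1 + (e ^ 2) ^ q) * ∫ φ in (0:ℝ)..(Real.pi / 2), Real.sin φ ^ (2 * k₂ - 1)
  have h := (intervalIntegral.intervalIntegrable_rpow' (a := 0) (b := 1)
    (show -1 < k₁ - 1 by linarith)).const_mul (2 ^ k₁ * M)
  refine h.mono_fun' ?_ ?_
  · refine Measurable.aestronglyMeasurable ?_
    refine Measurable.mul ?_ (Jh_meas _ _ _)
    unfold V; fun_prop
  rw [Set.uIoc_of_le zero_le_one]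
  refine (ae_restrict_iff' measurableSet_Ioc).2 (Filter.Eventually.of_forall fun a ha => ?_)
  have h1 := V_nonneg (k₁ := k₁) (k₂ := k₂) ha.1.le ha.2
  have h2 := Jh_nonneg (k₂ := k₂) (q := q) hs he he1 ha.1.le ha.2
  have h3 := V_le hk₁ hk ha.1.le ha.2
  have h4 := Jh_le (q := q) hk hs he he1 ha.1.le ha.2
  simp only
  rw [Real.norm_of_nonneg (by positivity)]
  calc _ ≤ (2 ^ k₁ * a ^ (k₁ - 1)) * M := mul_le_mul h3 h4 h2 (h1.trans h3)
    _ = _ := by ring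

noncomputable def J (k₁ k₂ q e s : ℝ) : ℝ := ∫ a in (0:ℝ)..1, V k₁ k₂ a * Jh k₂ q e s a

lemma bc_eq {k₁ k₂ l t : ℝ} (hk₁ : 0 < k₁) (hk₂ : 0 < k₂) (ht : 0 ≤ t) :
    bcIntegral k₁ k₂ l t = Real.exp ((l - (k₁ + 2 * k₂)) * t) *
      (J k₁ k₂ ((l - (k₁ + 2 * k₂)) / 2) (Real.exp (-2 * t)) 1
      + J k₁ k₂ ((l - (k₁ + 2 * k₂)) / 2) (Real.exp (-2 * t)) (-1)) := by
  set q := (l - (k₁ + 2 * k₂)) / 2 with hq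
  set e := Real.exp (-2 * t) with hee
  have he : 0 < e := Real.exp_pos _
  have he1 : e ≤ 1 := by rw [hee, Real.exp_le_one_iff]; linarith
  unfold J
  rw [← intervalIntegral.integral_add (VJh_int hk₁ hk₂ (by norm_num) he he1)
    (VJh_int hk₁ hk₂ (by norm_num) he he1)]
  have h1 : bcIntegral k₁ k₂ l t = ∫ r in (0:ℝ)..1, Real.exp ((l - (k₁ + 2 * k₂)) * t) *
      (V k₁ k₂ (1 - r) * Jin k₂ q e (1 - r)) := by
    unfold bcIntegral
    refine intervalIntegral.integral_congr fun r hr => ?_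
    rw [Set.uIcc_of_le zero_le_one] at hr
    simp only [Jin, V]
    rw [← intervalIntegral.integral_const_mul, ← intervalIntegral.integral_const_mul]
    refine intervalIntegral.integral_congr fun φ _ => ?_
    have hG := G_pos (c := Real.cos φ) he he1 (a := 1 - r) (by linarith [hr.2]) (by linarith [hr.1])
      (Real.neg_one_le_cos φ)
    rw [base_eq, Real.mul_rpow (Real.exp_pos _).le hG.le, ← Real.exp_mul, ← hq,
      show 2 * t * q = (l - (k₁ + 2 * k₂)) * t by rw [hq]; ring, sub_sub_cancel]
    ring
  rw [h1, intervalIntegral.integral_const_mul]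
  congr 1
  have := intervalIntegral.integral_comp_sub_left (a := 0) (b := 1)
    (fun a => V k₁ k₂ a * Jin k₂ q e a) 1
  simp only [sub_zero, sub_self] at this
  rw [this]
  refine intervalIntegral.integral_congr fun a ha => ?_
  rw [Set.uIcc_of_le zero_le_one] at ha
  rw [Jin_split hk₂ he he1 ha.1 ha.2]; ring


end BC

open MeasureTheory Real
namespace BC
lemma int_h {X s L : ℝ} (hX : 0 < X) (hs : 0 < s) (hL : 0 ≤ L) :
    IntervalIntegrable (fun φ => (φ / (X + φ)) ^ (s - 1) * (X / (X + φ) ^ 2)) volume 0 L ∧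
    ∫ φ in (0:ℝ)..L, (φ / (X + φ)) ^ (s - 1) * (X / (X + φ) ^ 2) ≤ 1 / s := by
  have hcont : ContinuousOn (fun φ : ℝ => (φ / (X + φ)) ^ s / s) (Set.Icc 0 L) := by
    refine ContinuousOn.div_const ?_ _
    refine ContinuousOn.rpow_const ?_ (fun x _ => Or.inr hs.le)
    refine ContinuousOn.div continuousOn_id (by fun_prop) fun x hx => ?_
    have := hx.1
    positivity
  have hder : ∀ x ∈ Set.Ioo 0 L, HasDerivAt (fun φ : ℝ => (φ / (X + φ)) ^ s / s)
      ((x / (X + x)) ^ (s - 1) * (X / (X + x) ^ 2)) x := by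
    intro x hx
    have hx0 : 0 < x := hx.1
    have hne : X + x ≠ 0 := by positivity
    have h1 : HasDerivAt (fun φ : ℝ => φ / (X + φ)) ((1 * (X + x) - x * 1) / (X + x) ^ 2) x :=
      (hasDerivAt_id x).div ((hasDerivAt_id x).const_add X) hne
    have h2 := (h1.rpow_const (p := s) (Or.inl (by positivity))).div_const s
    refine h2.congr_deriv ?_
    field_simp
    ring
  have hpos : ∀ x ∈ Set.Ioo 0 L, 0 ≤ (x / (X + x)) ^ (s - 1) * (X / (X + x) ^ 2) := by
    intro x hx
    have hx0 : 0 < x := hx.1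
    positivity
  have hIntg : IntervalIntegrable (fun φ => (φ / (X + φ)) ^ (s - 1) * (X / (X + φ) ^ 2)) volume 0 L :=
    (intervalIntegrable_iff_integrableOn_Ioc_of_le hL).2
      (intervalIntegral.integrableOn_deriv_of_nonneg hcont hder hpos)
  refine ⟨hIntg, ?_⟩
  rw [intervalIntegral.integral_eq_sub_of_hasDerivAt_of_le hL hcont hder hIntg]
  have h1 : (L / (X + L)) ^ s ≤ 1 := Real.rpow_le_one (by positivity)
    ((div_le_one (by positivity)).2 (by linarith)) hs.le
  simp only [zero_div, Real.zero_rpow hs.ne', sub_zero]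
  gcongr

lemma frac {X s φ d M : ℝ} (hX : 0 < X) (hs : 0 < s) (hφ : 0 < φ) (hM : (X + φ) ^ (-d) ≤ M) :
    (X + φ) ^ (-s - d) * φ ^ (s - 1) ≤
      M * ((φ / (X + φ)) ^ (s - 1) * (X / (X + φ) ^ 2)) + (X + φ) ^ (-d - 1) := by
  have hZ : 0 < X + φ := by positivity
  set Z := X + φ with hZd
  set u := φ / Z with hu
  have hu0 : 0 < u := by positivity
  have hu1 : u ≤ 1 := (div_le_one hZ).2 (by linarith)
  have e1 : φ ^ (s - 1) = u ^ (s - 1) * Z ^ (s - 1) := by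
    rw [← Real.mul_rpow hu0.le hZ.le, hu, div_mul_cancel₀ _ hZ.ne']
  have e2 : Z ^ (-s - d) * φ ^ (s - 1) = u ^ (s - 1) * Z ^ (-d - 1) := by
    rw [e1, show Z ^ (-d - 1) = Z ^ (-s - d) * Z ^ (s - 1) by rw [← Real.rpow_add hZ]; ring_nf]
    ring
  have e3 : Z ^ (-d - 1) = Z ^ (-d) / Z := Real.rpow_sub_one hZ.ne' _
  have e4 : X / Z + u = 1 := by rw [hu, ← add_div, ← hZd, div_self hZ.ne']
  have e5 : u ^ s = u ^ (s - 1) * u := by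
    rw [Real.rpow_sub_one hu0.ne', div_mul_cancel₀ _ hu0.ne']
  have e6 : u ^ s ≤ 1 := Real.rpow_le_one hu0.le hu1 hs.le
  have hp : 0 ≤ Z ^ (-d - 1) := by positivity
  calc Z ^ (-s - d) * φ ^ (s - 1) = u ^ (s - 1) * Z ^ (-d - 1) * (X / Z + u) := by rw [e2, e4, mul_one]
    _ = Z ^ (-d) * (u ^ (s - 1) * (X / Z ^ 2)) + u ^ s * Z ^ (-d - 1) := by
        rw [e5, mul_add]; congr 1
        · rw [e3]; field_simp
        · ring
    _ ≤ M * (u ^ (s - 1) * (X / Z ^ 2)) + 1 * Z ^ (-d - 1) := by gcongr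
    _ = _ := by rw [one_mul]

lemma cont_Z {X p L : ℝ} (hX : 0 < X) (hL : 0 ≤ L) :
    IntervalIntegrable (fun φ => (X + φ) ^ p) volume 0 L := by
  refine ContinuousOn.intervalIntegrable_of_Icc hL ?_
  refine ContinuousOn.rpow_const (by fun_prop) fun x hx => Or.inl ?_
  have := hx.1
  positivity

lemma int_Z {X p L : ℝ} (hX : 0 < X) (hL : 0 ≤ L) :
    p * ∫ φ in (0:ℝ)..L, (X + φ) ^ (p - 1) = (X + L) ^ p - X ^ p := by
  rw [← intervalIntegral.integral_const_mul]
  have := intervalIntegral.integral_eq_sub_of_hasDerivAt (a := 0) (b := L)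
    (f := fun φ => (X + φ) ^ p) (f' := fun φ => p * (X + φ) ^ (p - 1)) ?_
    ((cont_Z hX hL).const_mul p)
  · simpa using this
  · intro x hx
    rw [Set.uIcc_of_le hL] at hx
    have hx0 := hx.1
    have h1 : HasDerivAt (fun φ : ℝ => X + φ) 1 x := (hasDerivAt_id x).const_add X
    have h2 := h1.rpow_const (p := p) (Or.inl (by positivity))
    refine h2.congr_deriv ?_
    ring

lemma int_frac {X s d L : ℝ} (hX : 0 < X) (hs : 0 < s) (hd : 0 < d) (hL : 0 ≤ L) :
    IntervalIntegrable (fun φ => (X + φ) ^ (-s - d) * φ ^ (s - 1)) volume 0 L ∧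
    ∫ φ in (0:ℝ)..L, (X + φ) ^ (-s - d) * φ ^ (s - 1) ≤ X ^ (-d) * (1 / s + 1 / d) := by
  have hM : ∀ φ : ℝ, 0 < φ → (X + φ) ^ (-d) ≤ X ^ (-d) := fun φ hφ =>
    Real.rpow_le_rpow_of_nonpos hX (by linarith) (by linarith)
  obtain ⟨h1, h2⟩ := int_h hX hs hL
  have h3 := (h1.const_mul (X ^ (-d))).add (cont_Z (p := -d - 1) hX hL)
  have hI : IntervalIntegrable (fun φ => (X + φ) ^ (-s - d) * φ ^ (s - 1)) volume 0 L := by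
    refine h3.mono_fun' (Measurable.aestronglyMeasurable (by fun_prop)) ?_
    rw [Set.uIoc_of_le hL]
    refine (ae_restrict_iff' measurableSet_Ioc).2 (Filter.Eventually.of_forall fun φ hφ => ?_)
    have := hφ.1
    simp only
    rw [Real.norm_of_nonneg (by positivity)]
    exact frac hX hs hφ.1 (hM φ hφ.1)
  refine ⟨hI, ?_⟩
  calc _ ≤ ∫ φ in (0:ℝ)..L, (X ^ (-d) * ((φ / (X + φ)) ^ (s - 1) * (X / (X + φ) ^ 2))
          + (X + φ) ^ (-d - 1)) :=
        intervalIntegral.integral_mono_on_of_le_Ioo hL hI h3 fun φ hφ => frac hX hs hφ.1 (hM φ hφ.1)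
    _ = X ^ (-d) * (∫ φ in (0:ℝ)..L, ((φ / (X + φ)) ^ (s - 1) * (X / (X + φ) ^ 2)))
        + ∫ φ in (0:ℝ)..L, (X + φ) ^ (-d - 1) := by
        rw [intervalIntegral.integral_add (h1.const_mul _) (cont_Z hX hL),
          intervalIntegral.integral_const_mul]
    _ ≤ X ^ (-d) * (1 / s) + X ^ (-d) * (1 / d) := by
        refine add_le_add (by gcongr) ?_
        have h4 := int_Z (p := -d) hX hL
        have h5 : 0 ≤ (X + L) ^ (-d) := by positivity
        rw [mul_one_div, le_div_iff₀ hd]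
        linarith
    _ = _ := by ring

lemma outer_frac {l k Λ t : ℝ} (hk : 0 < k) (hl : 0 ≤ l) (hlΛ : l ≤ Λ) (ht : 0 ≤ t) :
    IntervalIntegrable (fun a => (Real.exp (-2 * t) + a) ^ (l - k) * a ^ (k - 1)) volume 0 1 ∧
    ∫ a in (0:ℝ)..1, (Real.exp (-2 * t) + a) ^ (l - k) * a ^ (k - 1) ≤
      (2 ^ Λ * ((1 + Λ) / k + 3)) * ((1 + t) / (1 + l * t)) := by
  set X := Real.exp (-2 * t) with hXd
  have hX : 0 < X := Real.exp_pos _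
  have hX1 : X ≤ 1 := by rw [hXd, Real.exp_le_one_iff]; linarith
  have hM : ∀ φ : ℝ, 0 < φ → φ ≤ 1 → (X + φ) ^ (-(-l)) ≤ 2 ^ Λ := fun φ hφ hφ1 => by
    rw [neg_neg]
    calc (X + φ) ^ l ≤ 2 ^ l := Real.rpow_le_rpow (by positivity) (by linarith) hl
      _ ≤ 2 ^ Λ := Real.rpow_le_rpow_of_exponent_le (by norm_num) hlΛ
  have hf : ∀ φ : ℝ, 0 < φ → φ ≤ 1 → (X + φ) ^ (l - k) * φ ^ (k - 1) ≤
      2 ^ Λ * ((φ / (X + φ)) ^ (k - 1) * (X / (X + φ) ^ 2)) + (X + φ) ^ (l - 1) := fun φ hφ hφ1 => by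
    have := frac hX hk hφ (hM φ hφ hφ1)
    rwa [show -k - -l = l - k by ring, neg_neg] at this
  obtain ⟨h1, h2⟩ := int_h hX hk zero_le_one
  have h3 := (h1.const_mul (2 ^ Λ)).add (cont_Z (p := l - 1) hX zero_le_one)
  have hI : IntervalIntegrable (fun φ => (X + φ) ^ (l - k) * φ ^ (k - 1)) volume 0 1 := by
    refine h3.mono_fun' (Measurable.aestronglyMeasurable (by fun_prop)) ?_
    rw [Set.uIoc_of_le zero_le_one]
    refine (ae_restrict_iff' measurableSet_Ioc).2 (Filter.Eventually.of_forall fun φ hφ => ?_)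
    have := hφ.1
    simp only
    rw [Real.norm_of_nonneg (by positivity)]
    exact hf φ hφ.1 hφ.2
  refine ⟨hI, ?_⟩
  set K := ∫ φ in (0:ℝ)..1, (X + φ) ^ (l - 1) with hK
  have hA : 0 < (2:ℝ) ^ Λ := by positivity
  have hK1 : l * K ≤ 2 ^ Λ := by
    rw [hK, int_Z hX zero_le_one]
    have := hM 1 one_pos le_rfl
    rw [neg_neg] at this
    have : 0 ≤ X ^ l := by positivity
    linarith
  have hK2 : K ≤ 2 ^ Λ * (1 + 2 * t) := by
    have hi : IntervalIntegrable (fun φ => 2 ^ Λ * (X + φ) ^ (-1 : ℝ)) volume 0 1 :=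
      (cont_Z hX zero_le_one).const_mul _
    calc K ≤ ∫ φ in (0:ℝ)..1, 2 ^ Λ * (X + φ) ^ (-1 : ℝ) := by
          refine intervalIntegral.integral_mono_on_of_le_Ioo zero_le_one (cont_Z hX zero_le_one) hi
            fun φ hφ => ?_
          have h0 := hφ.1
          have := hM φ hφ.1 hφ.2.le
          rw [neg_neg] at this
          rw [show l - 1 = l + (-1) by ring, Real.rpow_add (by positivity)]
          gcongr
      _ = 2 ^ Λ * (Real.log (X + 1) - Real.log X) := by
          rw [intervalIntegral.integral_const_mul]
          congr 1
          have := intervalIntegral.integral_eq_sub_of_hasDerivAt (a := 0) (b := 1)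
            (f := fun φ => Real.log (X + φ)) (f' := fun φ => (X + φ) ^ (-1 : ℝ)) ?_
            (cont_Z hX zero_le_one)
          · simpa using this
          · intro x hx
            rw [Set.uIcc_of_le zero_le_one] at hx
            have hx0 := hx.1
            have h1 : HasDerivAt (fun φ : ℝ => X + φ) 1 x := (hasDerivAt_id x).const_add X
            have h2 := h1.log (by positivity)
            rw [Real.rpow_neg_one]
            simpa using h2
      _ ≤ 2 ^ Λ * (1 + 2 * t) := by
          gcongr
          have : Real.log (X + 1) ≤ X + 1 - 1 := Real.log_le_sub_one_of_pos (by positivity)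
          rw [hXd, Real.log_exp]
          rw [hXd] at this hX1
          linarith
  have hle : ∫ φ in (0:ℝ)..1, (X + φ) ^ (l - k) * φ ^ (k - 1) ≤ 2 ^ Λ * (1 / k) + K := by
    calc _ ≤ ∫ φ in (0:ℝ)..1, (2 ^ Λ * ((φ / (X + φ)) ^ (k - 1) * (X / (X + φ) ^ 2))
          + (X + φ) ^ (l - 1)) :=
        intervalIntegral.integral_mono_on_of_le_Ioo zero_le_one hI h3 fun φ hφ => hf φ hφ.1 hφ.2.le
      _ = 2 ^ Λ * (∫ φ in (0:ℝ)..1, ((φ / (X + φ)) ^ (k - 1) * (X / (X + φ) ^ 2))) + K := by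
        rw [intervalIntegral.integral_add (h1.const_mul _) (cont_Z hX zero_le_one),
          intervalIntegral.integral_const_mul]
      _ ≤ _ := by gcongr
  -- combine
  refine hle.trans ?_
  have hlt : 0 ≤ l * t := by positivity
  have hΛ : 0 ≤ Λ := hl.trans hlΛ
  have hpos : 0 < 1 + l * t := by positivity
  rw [← mul_div_assoc (2 ^ Λ * ((1 + Λ) / k + 3)), le_div_iff₀ hpos]
  have hb : K * (1 + l * t) ≤ 2 ^ Λ * (3 * (1 + t)) := by
    have : l * K * t ≤ 2 ^ Λ * t := by gcongr
    nlinarith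
  have hc : l * t ≤ Λ * t := by gcongr
  have hd : 1 + l * t ≤ (1 + Λ) * (1 + t) := by nlinarith
  have he : 2 ^ Λ * (1 / k) * (1 + l * t) ≤ 2 ^ Λ * (1 / k) * ((1 + Λ) * (1 + t)) := by gcongr
  calc _ = 2 ^ Λ * (1 / k) * (1 + l * t) + K * (1 + l * t) := by ring
    _ ≤ 2 ^ Λ * (1 / k) * ((1 + Λ) * (1 + t)) + 2 ^ Λ * (3 * (1 + t)) := add_le_add he hb
    _ = _ := by ring

end BC

open MeasureTheory Real
namespace BC

lemma exp_int {x s p L : ℝ} (hs : 0 < s) (hp : 0 < p) :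
    IntervalIntegrable (fun y => y ^ (s - 1) * Real.exp (-(x * y ^ p))) volume 0 L := by
  refine (intervalIntegral.intervalIntegrable_rpow' (by linarith)).mul_continuousOn ?_
  refine Continuous.continuousOn ?_
  have := Real.continuous_rpow_const (q := p) hp.le
  fun_prop

lemma exp_up {s p L : ℝ} (hs : 0 < s) (hp : 0 < p) (hL : 0 ≤ L) : ∃ C : ℝ, 0 < C ∧ ∀ x, 0 ≤ x →
    ∫ y in (0:ℝ)..L, y ^ (s - 1) * Real.exp (-(x * y ^ p)) ≤ C * (1 + x) ^ (-(s / p)) := by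
  have hG : 0 < Real.Gamma (s / p) := Real.Gamma_pos_of_pos (by positivity)
  refine ⟨Real.exp (L ^ p) * ((1 / p) * Real.Gamma (s / p)), by positivity, fun x hx => ?_⟩
  have hI := integrableOn_rpow_mul_exp_neg_mul_rpow (p := p) (s := s - 1) (b := 1 + x)
    (by linarith) hp (by positivity)
  have hval := integral_rpow_mul_exp_neg_mul_rpow (p := p) (q := s - 1) (b := 1 + x)
    hp (by linarith) (by positivity)
  have hJ : IntervalIntegrable (fun y => y ^ (s - 1) * Real.exp (-(1 + x) * y ^ p)) volume 0 L :=
    (intervalIntegrable_iff_integrableOn_Ioc_of_le hL).2 (hI.mono_set Set.Ioc_subset_Ioi_self)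
  calc _ ≤ ∫ y in (0:ℝ)..L, Real.exp (L ^ p) * (y ^ (s - 1) * Real.exp (-(1 + x) * y ^ p)) := by
        refine intervalIntegral.integral_mono_on hL (exp_int hs hp) (hJ.const_mul _) fun y hy => ?_
        have h1 : y ^ p ≤ L ^ p := Real.rpow_le_rpow hy.1 hy.2 hp.le
        have h0 : 0 ≤ y ^ (s - 1) := Real.rpow_nonneg hy.1 _
        calc _ ≤ y ^ (s - 1) * Real.exp (L ^ p + -(1 + x) * y ^ p) := by
              gcongr; nlinarith
          _ = _ := by rw [Real.exp_add]; ring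
    _ = Real.exp (L ^ p) * ∫ y in Set.Ioc 0 L, y ^ (s - 1) * Real.exp (-(1 + x) * y ^ p) := by
        rw [intervalIntegral.integral_const_mul, intervalIntegral.integral_of_le hL]
    _ ≤ Real.exp (L ^ p) * ∫ y in Set.Ioi 0, y ^ (s - 1) * Real.exp (-(1 + x) * y ^ p) := by
        refine mul_le_mul_of_nonneg_left (setIntegral_mono_set hI ?_
          Set.Ioc_subset_Ioi_self.eventuallyLE) (Real.exp_pos _).le
        refine (ae_restrict_iff' measurableSet_Ioi).2 (Filter.Eventually.of_forall fun y hy => ?_)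
        have : 0 < y := hy
        simp only [Pi.zero_apply]; positivity
    _ = _ := by
        rw [hval, sub_add_cancel, neg_div]; ring

lemma exp_low {s p L : ℝ} (hs : 0 < s) (hp : 0 < p) (hL : 0 < L) : ∃ C : ℝ, 0 < C ∧ ∀ x, 0 ≤ x →
    C * (1 + x) ^ (-(s / p)) ≤ ∫ y in (0:ℝ)..L, y ^ (s - 1) * Real.exp (-(x * y ^ p)) := by
  refine ⟨Real.exp (-(L ^ p)) * (L ^ s / s), by positivity, fun x hx => ?_⟩
  set w := (1 + x) ^ (-(1 / p)) with hw
  have hw0 : 0 < w := by positivity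
  have hw1 : w ≤ 1 := Real.rpow_le_one_of_one_le_of_nonpos (by linarith)
    (by rw [neg_nonpos]; positivity)
  have hwp : w ^ p = (1 + x)⁻¹ := by
    rw [hw, ← Real.rpow_mul (by positivity), show -(1 / p) * p = -1 by field_simp, Real.rpow_neg_one]
  have hws : w ^ s = (1 + x) ^ (-(s / p)) := by
    rw [hw, ← Real.rpow_mul (by positivity)]; congr 1; ring
  have hLw : L * w ≤ L := by nlinarith
  have hLw0 : 0 ≤ L * w := by positivity
  have hi := intervalIntegral.intervalIntegrable_rpow' (a := 0) (b := L * w) (r := s - 1) (by linarith)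
  calc _ = ∫ y in (0:ℝ)..(L * w), Real.exp (-(L ^ p)) * y ^ (s - 1) := by
        rw [intervalIntegral.integral_const_mul, integral_rpow (Or.inl (by linarith)),
          sub_add_cancel, Real.zero_rpow hs.ne', Real.mul_rpow hL.le hw0.le, hws]; ring
    _ ≤ ∫ y in (0:ℝ)..(L * w), y ^ (s - 1) * Real.exp (-(x * y ^ p)) := by
        refine intervalIntegral.integral_mono_on hLw0 (hi.const_mul _) (exp_int hs hp) fun y hy => ?_
        have h1 : y ^ p ≤ (L * w) ^ p := Real.rpow_le_rpow hy.1 hy.2 hp.le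
        rw [Real.mul_rpow hL.le hw0.le, hwp] at h1
        have h0 : 0 ≤ y ^ (s - 1) := Real.rpow_nonneg hy.1 _
        rw [mul_comm]
        gcongr
        have hLp : 0 ≤ L ^ p := by positivity
        calc x * y ^ p ≤ x * (L ^ p * (1 + x)⁻¹) := by gcongr
          _ = L ^ p * (x / (1 + x)) := by rw [div_eq_mul_inv]; ring
          _ ≤ L ^ p * 1 := by
            gcongr
            rw [div_le_one (by positivity)]; linarith
          _ = L ^ p := mul_one _
    _ ≤ _ := by
        refine intervalIntegral.integral_mono_interval le_rfl hLw0 hLw ?_ (exp_int hs hp)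
        refine (ae_restrict_iff' measurableSet_Ioc).2 (Filter.Eventually.of_forall fun y hy => ?_)
        have := hy.1
        simp only [Pi.zero_apply]; positivity

variable {k₁ k₂ : ℝ}

/-- monotonicity of `G` in `c` -/
lemma G_mono {e a c c' : ℝ} (he : 0 < e) (he1 : e ≤ 1) (ha1 : a ≤ 1) (h : c ≤ c') :
    G e a c ≤ G e a c' := by
  rw [G_low, G_low]
  have h1 : 0 ≤ 1 - a := by linarith
  have h3 : 0 ≤ (1 - e) / 2 := by linarith
  gcongr

lemma J_mono {q q' e s s' : ℝ} (hk₁ : 0 < k₁) (hk₂ : 0 < k₂) (he : 0 < e) (he1 : e ≤ 1)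
    (hs : |s| ≤ 1) (hs' : |s'| ≤ 1)
    (h : ∀ a ∈ Set.Ioo (0:ℝ) 1, ∀ φ ∈ Set.Ioo (0:ℝ) (Real.pi / 2),
      G e a (s * Real.cos φ) ^ q ≤ G e a (s' * Real.cos φ) ^ q') :
    J k₁ k₂ q e s ≤ J k₁ k₂ q' e s' := by
  have hp := Real.pi_pos
  refine intervalIntegral.integral_mono_on_of_le_Ioo zero_le_one (VJh_int hk₁ hk₂ hs he he1)
    (VJh_int hk₁ hk₂ hs' he he1) fun a ha => ?_
  refine mul_le_mul_of_nonneg_left ?_ (V_nonneg ha.1.le ha.2.le)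
  refine intervalIntegral.integral_mono_on_of_le_Ioo (by positivity)
    (int_G hk₂ hs he he1 ha.1.le ha.2.le (by positivity) (by linarith))
    (int_G hk₂ hs' he he1 ha.1.le ha.2.le (by positivity) (by linarith)) fun φ hφ => ?_
  have hsn : 0 ≤ Real.sin φ := Real.sin_nonneg_of_nonneg_of_le_pi hφ.1.le (by linarith [hφ.2])
  exact mul_le_mul_of_nonneg_right (h a ha φ hφ) (by positivity)

lemma J_up_of {q e s A : ℝ} {g : ℝ → ℝ} (hk₁ : 0 < k₁) (hk₂ : 0 < k₂) (he : 0 < e) (he1 : e ≤ 1)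
    (hs : |s| ≤ 1) (hg : IntervalIntegrable (fun a => g a * a ^ (k₁ - 1)) volume 0 1)
    (hA : ∫ a in (0:ℝ)..1, g a * a ^ (k₁ - 1) ≤ A)
    (h : ∀ a ∈ Set.Ioo (0:ℝ) 1, Jh k₂ q e s a ≤ g a) :
    J k₁ k₂ q e s ≤ 2 ^ k₁ * A := by
  calc J k₁ k₂ q e s ≤ ∫ a in (0:ℝ)..1, 2 ^ k₁ * (g a * a ^ (k₁ - 1)) := by
        refine intervalIntegral.integral_mono_on_of_le_Ioo zero_le_one (VJh_int hk₁ hk₂ hs he he1)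
          (hg.const_mul _) fun a ha => ?_
        have h1 := V_nonneg (k₁ := k₁) (k₂ := k₂) ha.1.le ha.2.le
        have h3 := V_le hk₁ hk₂ ha.1.le ha.2.le
        have h2 := Jh_nonneg (k₂ := k₂) (q := q) hs he he1 ha.1.le ha.2.le
        calc _ ≤ (2 ^ k₁ * a ^ (k₁ - 1)) * g a := mul_le_mul h3 (h a ha) h2 (h1.trans h3)
          _ = _ := by ring
    _ = 2 ^ k₁ * ∫ a in (0:ℝ)..1, g a * a ^ (k₁ - 1) := intervalIntegral.integral_const_mul _ _
    _ ≤ _ := by gcongr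

lemma Jh_up_of {q e s a A : ℝ} {g : ℝ → ℝ} (hk₂ : 0 < k₂) (he : 0 < e) (he1 : e ≤ 1)
    (ha : 0 ≤ a) (ha1 : a ≤ 1) (hs : |s| ≤ 1)
    (hg : IntervalIntegrable (fun φ => g φ * φ ^ (2 * k₂ - 1)) volume 0 (Real.pi / 2))
    (hA : ∫ φ in (0:ℝ)..(Real.pi / 2), g φ * φ ^ (2 * k₂ - 1) ≤ A)
    (h : ∀ φ ∈ Set.Ioo (0:ℝ) (Real.pi / 2), G e a (s * Real.cos φ) ^ q ≤ g φ) :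
    Jh k₂ q e s a ≤ (1 / 2 : ℝ) ^ (-|2 * k₂ - 1|) * A := by
  have hp := Real.pi_pos
  calc Jh k₂ q e s a ≤ ∫ φ in (0:ℝ)..(Real.pi / 2), (1 / 2 : ℝ) ^ (-|2 * k₂ - 1|) *
          (g φ * φ ^ (2 * k₂ - 1)) := by
        refine intervalIntegral.integral_mono_on_of_le_Ioo (by positivity)
          (int_G hk₂ hs he he1 ha ha1 (by positivity) (by linarith)) (hg.const_mul _) fun φ hφ => ?_
        have hsn : 0 ≤ Real.sin φ := Real.sin_nonneg_of_nonneg_of_le_pi hφ.1.le (by linarith [hφ.2])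
        have hc : |s * Real.cos φ| ≤ 1 := by
          rw [abs_mul]; exact mul_le_one₀ hs (abs_nonneg _) (Real.abs_cos_le_one φ)
        have hG := G_pos he he1 ha ha1 (abs_le.1 hc).1
        have hGq : 0 ≤ G e a (s * Real.cos φ) ^ q := by positivity
        calc _ ≤ g φ * ((1 / 2 : ℝ) ^ (-|2 * k₂ - 1|) * φ ^ (2 * k₂ - 1)) :=
              mul_le_mul (h φ hφ) (sin_cmp _ hφ.1 hφ.2.le).2 (by positivity) (hGq.trans (h φ hφ))
          _ = _ := by ring
    _ = (1 / 2 : ℝ) ^ (-|2 * k₂ - 1|) * ∫ φ in (0:ℝ)..(Real.pi / 2), g φ * φ ^ (2 * k₂ - 1) :=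
        intervalIntegral.integral_const_mul _ _
    _ ≤ _ := by gcongr

lemma Jh_low_of {q e s a A L : ℝ} {g : ℝ → ℝ} (hk₂ : 0 < k₂) (he : 0 < e) (he1 : e ≤ 1)
    (ha : 0 ≤ a) (ha1 : a ≤ 1) (hs : |s| ≤ 1) (hL0 : 0 ≤ L) (hL : L ≤ Real.pi / 2)
    (hg : IntervalIntegrable (fun φ => g φ * φ ^ (2 * k₂ - 1)) volume 0 L)
    (hA : A ≤ ∫ φ in (0:ℝ)..L, g φ * φ ^ (2 * k₂ - 1))
    (h : ∀ φ ∈ Set.Ioo (0:ℝ) L, g φ ≤ G e a (s * Real.cos φ) ^ q) :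
    (1 / 2 : ℝ) ^ |2 * k₂ - 1| * A ≤ Jh k₂ q e s a := by
  have hp := Real.pi_pos
  have hcc : ∀ φ, |s * Real.cos φ| ≤ 1 := fun φ => by
    rw [abs_mul]; exact mul_le_one₀ hs (abs_nonneg _) (Real.abs_cos_le_one φ)
  calc _ ≤ (1 / 2 : ℝ) ^ |2 * k₂ - 1| * ∫ φ in (0:ℝ)..L, g φ * φ ^ (2 * k₂ - 1) := by gcongr
    _ = ∫ φ in (0:ℝ)..L, (1 / 2 : ℝ) ^ |2 * k₂ - 1| * (g φ * φ ^ (2 * k₂ - 1)) :=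
        (intervalIntegral.integral_const_mul _ _).symm
    _ ≤ ∫ φ in (0:ℝ)..L, G e a (s * Real.cos φ) ^ q * Real.sin φ ^ (2 * k₂ - 1) := by
        refine intervalIntegral.integral_mono_on_of_le_Ioo hL0 (hg.const_mul _)
          (int_G hk₂ hs he he1 ha ha1 hL0 (by linarith)) fun φ hφ => ?_
        have hG := G_pos he he1 ha ha1 (abs_le.1 (hcc φ)).1
        have hφ0 := hφ.1
        calc _ = g φ * ((1 / 2 : ℝ) ^ |2 * k₂ - 1| * φ ^ (2 * k₂ - 1)) := by ring
          _ ≤ _ := mul_le_mul (h φ hφ) (sin_cmp _ hφ.1 (hφ.2.le.trans hL)).1 (by positivity) (by positivity)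
    _ ≤ Jh k₂ q e s a := by
        refine intervalIntegral.integral_mono_interval le_rfl hL0 hL ?_
          (int_G hk₂ hs he he1 ha ha1 (by positivity) (by linarith))
        refine (ae_restrict_iff' measurableSet_Ioc).2 (Filter.Eventually.of_forall fun φ hφ => ?_)
        have hsn : 0 ≤ Real.sin φ := Real.sin_nonneg_of_nonneg_of_le_pi hφ.1.le (by linarith [hφ.2])
        have hG := G_pos he he1 ha ha1 (abs_le.1 (hcc φ)).1
        simp only [Pi.zero_apply]; positivity

lemma J_low_of {q e s A α : ℝ} {g : ℝ → ℝ} (hk₁ : 0 < k₁) (hk₂ : 0 < k₂) (he : 0 < e) (he1 : e ≤ 1)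
    (hs : |s| ≤ 1) (hα : 0 ≤ α) (hα1 : α ≤ 1 / 2)
    (hg : IntervalIntegrable (fun a => g a * a ^ (k₁ - 1)) volume α (1 / 2))
    (hA : A ≤ ∫ a in α..(1 / 2), g a * a ^ (k₁ - 1))
    (h : ∀ a ∈ Set.Ioo α (1 / 2), g a ≤ Jh k₂ q e s a) :
    (1 / 2 * (1 / 2) ^ (2 * k₂)) * A ≤ J k₁ k₂ q e s := by
  calc _ ≤ (1 / 2 * (1 / 2) ^ (2 * k₂)) * ∫ a in α..(1 / 2), g a * a ^ (k₁ - 1) := by gcongr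
    _ = ∫ a in α..(1 / 2), (1 / 2 * (1 / 2) ^ (2 * k₂)) * (g a * a ^ (k₁ - 1)) :=
        (intervalIntegral.integral_const_mul _ _).symm
    _ ≤ ∫ a in α..(1 / 2), V k₁ k₂ a * Jh k₂ q e s a := by
        refine intervalIntegral.integral_mono_on_of_le_Ioo hα1 (hg.const_mul _)
          ((VJh_int hk₁ hk₂ hs he he1).mono_set ?_) fun a ha => ?_
        · rw [Set.uIcc_of_le hα1, Set.uIcc_of_le zero_le_one]
          exact Set.Icc_subset_Icc hα (by norm_num)
        have ha0 : 0 < a := lt_of_le_of_lt hα ha.1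
        have ha1 : a ≤ 1 := by linarith [ha.2]
        have h1 := V_nonneg (k₁ := k₁) (k₂ := k₂) ha0.le ha1
        have h3 := V_ge hk₁ hk₂ ha0.le ha.2.le
        have h2 := Jh_nonneg (k₂ := k₂) (q := q) hs he he1 ha0.le ha1
        calc _ = ((1 / 2 * (1 / 2) ^ (2 * k₂)) * a ^ (k₁ - 1)) * g a := by ring
          _ ≤ ((1 / 2 * (1 / 2) ^ (2 * k₂)) * a ^ (k₁ - 1)) * Jh k₂ q e s a :=
            mul_le_mul_of_nonneg_left (h a ha) (by positivity)
          _ ≤ _ := by gcongr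
    _ ≤ J k₁ k₂ q e s := by
        refine intervalIntegral.integral_mono_interval hα hα1 (by norm_num) ?_
          (VJh_int hk₁ hk₂ hs he he1)
        refine (ae_restrict_iff' measurableSet_Ioc).2 (Filter.Eventually.of_forall fun a ha => ?_)
        exact mul_nonneg (V_nonneg ha.1.le ha.2) (Jh_nonneg hs he he1 ha.1.le ha.2)

end BC

open MeasureTheory Real
namespace BC
variable {k₁ k₂ : ℝ}

lemma U1 (hk₁ : 0 < k₁) (hk₂ : 0 < k₂) : ∃ C : ℝ, 0 < C ∧ ∀ q e : ℝ, 0 ≤ q → 0 < e → e ≤ 1 →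
    J k₁ k₂ q e 1 ≤ C * (1 + q * ((1 - e) / 2) / 16) ^ (-(k₁ + k₂)) := by
  have hp := Real.pi_pos
  obtain ⟨C1, hC1, h1⟩ := exp_up (s := 2 * k₂) (p := 2) (L := Real.pi / 2) (by positivity)
    (by norm_num) (by positivity)
  obtain ⟨C2, hC2, h2⟩ := exp_up (s := k₁) (p := 1) (L := 1) hk₁ (by norm_num) (by norm_num)
  set D := (1 / 2 : ℝ) ^ (-|2 * k₂ - 1|) with hD
  have hD0 : 0 < D := by positivity
  refine ⟨2 ^ k₁ * (D * C1 * C2), by positivity, fun q e hq he he1 => ?_⟩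
  have hτ : 0 ≤ (1 - e) / 2 := by linarith
  set x := q * ((1 - e) / 2) / 16 with hx
  have hx0 : 0 ≤ x := by positivity
  set g : ℝ → ℝ := fun a => D * (Real.exp (-(x * a)) * (C1 * (1 + x) ^ (-(2 * k₂ / 2)))) with hg
  have hgg : ∀ a, g a * a ^ (k₁ - 1) = (D * (C1 * (1 + x) ^ (-(2 * k₂ / 2)))) *
      (a ^ (k₁ - 1) * Real.exp (-(x * a ^ (1:ℝ)))) := fun a => by
    simp only [hg, Real.rpow_one]; ring
  refine (J_up_of (g := g) (A := D * (C1 * (1 + x) ^ (-(2 * k₂ / 2))) *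
    (C2 * (1 + x) ^ (-(k₁ / 1)))) hk₁ hk₂ he he1 (by norm_num) ?_ ?_ ?_).trans ?_
  · simp only [hgg]
    exact (exp_int hk₁ (by norm_num)).const_mul _
  · simp only [hgg, intervalIntegral.integral_const_mul]
    exact mul_le_mul_of_nonneg_left (h2 x hx0) (by positivity)
  · intro a ha
    have hff : ∀ φ : ℝ, (Real.exp (-(x * a)) * Real.exp (-(x * φ ^ (2:ℝ)))) * φ ^ (2 * k₂ - 1) =
      Real.exp (-(x * a)) * (φ ^ (2 * k₂ - 1) * Real.exp (-(x * φ ^ (2:ℝ)))) := fun φ => by ring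
    refine Jh_up_of (g := fun φ => Real.exp (-(x * a)) * Real.exp (-(x * φ ^ (2:ℝ))))
      hk₂ he he1 ha.1.le ha.2.le (by norm_num) ?_ ?_ ?_
    · simp only [hff]
      exact (exp_int (by positivity) (by norm_num)).const_mul _
    · simp only [hff, intervalIntegral.integral_const_mul]
      exact mul_le_mul_of_nonneg_left (h1 x hx0) (Real.exp_pos _).le
    · intro φ hφ
      have hc0 : 0 ≤ Real.cos φ := Real.cos_nonneg_of_neg_pi_div_two_le_of_le
        (by linarith [hφ.1]) hφ.2.le
      have hc1 := Real.cos_le_one φ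
      rw [one_mul]
      have hG := G_pos he he1 ha.1.le ha.2.le (c := Real.cos φ) (by linarith)
      have hs := G_sub_ge he he1 ha.1.le ha.2.le hc1 hc0
      have ho := one_sub_cos_ge hφ.1.le hφ.2.le
      have hle : G e a (Real.cos φ) ≤ Real.exp (G e a (Real.cos φ) - 1) := by
        linarith [Real.add_one_le_exp (G e a (Real.cos φ) - 1)]
      refine (Real.rpow_le_rpow hG.le hle hq).trans ?_
      rw [← Real.exp_mul, ← Real.exp_add, Real.exp_le_exp, Real.rpow_two]
      have hs2 : ((1 - e) / 2) * (a + φ ^ 2) / 16 ≤ 1 - G e a (Real.cos φ) := by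
        refine le_trans ?_ hs
        have : (a + φ ^ 2) / 8 ≤ a + (1 - Real.cos φ) := by linarith [ha.1]
        nlinarith
      have := mul_le_mul_of_nonneg_left hs2 hq
      rw [hx]; linarith
  · rw [div_one, show -(2 * k₂ / 2) = -k₂ by ring, show -(k₁ + k₂) = -k₂ + -k₁ by ring,
      Real.rpow_add (by positivity)]
    apply le_of_eq; ring

lemma L1 (hk₁ : 0 < k₁) (hk₂ : 0 < k₂) : ∃ C : ℝ, 0 < C ∧ ∀ l e : ℝ, 0 ≤ l → 0 < e → e ≤ 1 →
    C * (1 + 8 * l * ((1 - e) / 2)) ^ (-(k₁ + k₂)) ≤ J k₁ k₂ ((l - (k₁ + 2 * k₂)) / 2) e 1 := by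
  have hp := Real.pi_pos
  obtain ⟨C1, hC1, h1⟩ := exp_low (s := 2 * k₂) (p := 2) (L := Real.pi / 2) (by positivity)
    (by norm_num) (by positivity)
  obtain ⟨C2, hC2, h2⟩ := exp_low (s := k₁) (p := 1) (L := 1 / 2) hk₁ (by norm_num) (by norm_num)
  set D := (1 / 2 : ℝ) ^ |2 * k₂ - 1| with hD
  have hD0 : 0 < D := by positivity
  refine ⟨(1 / 2 * (1 / 2) ^ (2 * k₂)) * (D * C1 * C2), by positivity, fun l e hl he he1 => ?_⟩
  have hτ : 0 ≤ (1 - e) / 2 := by linarith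
  set x := 8 * l * ((1 - e) / 2) with hx
  have hx0 : 0 ≤ x := by positivity
  set g : ℝ → ℝ := fun a => D * (Real.exp (-(x * a)) * (C1 * (1 + x) ^ (-(2 * k₂ / 2)))) with hg
  have hgg : ∀ a, g a * a ^ (k₁ - 1) = (D * (C1 * (1 + x) ^ (-(2 * k₂ / 2)))) *
      (a ^ (k₁ - 1) * Real.exp (-(x * a ^ (1:ℝ)))) := fun a => by
    simp only [hg, Real.rpow_one]; ring
  refine le_trans ?_ (J_low_of (g := g) (α := 0) (A := D * (C1 * (1 + x) ^ (-(2 * k₂ / 2))) *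
    (C2 * (1 + x) ^ (-(k₁ / 1)))) hk₁ hk₂ he he1 (by norm_num) le_rfl (by norm_num) ?_ ?_ ?_)
  · rw [div_one, show -(2 * k₂ / 2) = -k₂ by ring, show -(k₁ + k₂) = -k₂ + -k₁ by ring,
      Real.rpow_add (by positivity)]
    apply le_of_eq; ring
  · simp only [hgg]
    exact (exp_int hk₁ (by norm_num)).const_mul _
  · simp only [hgg, intervalIntegral.integral_const_mul]
    exact mul_le_mul_of_nonneg_left (h2 x hx0) (by positivity)
  · intro a ha
    have ha1 : a ≤ 1 := by linarith [ha.2]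
    have hff : ∀ φ : ℝ, (Real.exp (-(x * a)) * Real.exp (-(x * φ ^ (2:ℝ)))) * φ ^ (2 * k₂ - 1) =
      Real.exp (-(x * a)) * (φ ^ (2 * k₂ - 1) * Real.exp (-(x * φ ^ (2:ℝ)))) := fun φ => by ring
    refine Jh_low_of (g := fun φ => Real.exp (-(x * a)) * Real.exp (-(x * φ ^ (2:ℝ))))
      (L := Real.pi / 2) hk₂ he he1 ha.1.le ha1 (by norm_num) (by positivity) le_rfl ?_ ?_ ?_
    · simp only [hff]
      exact (exp_int (by positivity) (by norm_num)).const_mul _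
    · simp only [hff, intervalIntegral.integral_const_mul]
      exact mul_le_mul_of_nonneg_left (h1 x hx0) (Real.exp_pos _).le
    · intro φ hφ
      have hc0 : 0 ≤ Real.cos φ := Real.cos_nonneg_of_neg_pi_div_two_le_of_le
        (by linarith [hφ.1]) hφ.2.le
      have hc1 := Real.cos_le_one φ
      rw [one_mul]
      have hG := G_pos he he1 ha.1.le ha1 (c := Real.cos φ) (by linarith)
      have hG1 := G_le_one he he1 ha.1.le ha1 hc1
      have hG4 := G_ge_quarter he he1 ha1 hc0
      have hs := G_sub_le he he1 ha.1.le ha1 hc1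
      have ho := one_sub_cos_le φ
      set Γ := G e a (Real.cos φ) with hΓ
      refine le_trans ?_ (Real.rpow_le_rpow_of_exponent_ge hG hG1
        (show (l - (k₁ + 2 * k₂)) / 2 ≤ l / 2 by linarith))
      rw [Real.rpow_def_of_pos hG, ← Real.exp_add, Real.exp_le_exp, Real.rpow_two]
      have hlog := Real.one_sub_inv_le_log_of_pos hG
      have hinv : Γ⁻¹ - 1 ≤ 4 * (1 - Γ) := by
        have : Γ⁻¹ ≤ 4 := by
          rw [inv_le_comm₀ hG (by norm_num)]; linarith
        have h3 : Γ⁻¹ - 1 = Γ⁻¹ * (1 - Γ) := by rw [mul_sub, inv_mul_cancel₀ hG.ne']; ring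
        rw [h3]
        exact mul_le_mul_of_nonneg_right this (by linarith)
      have hs2 : 1 - Γ ≤ 4 * ((1 - e) / 2) * (a + φ ^ 2) := by
        refine hs.trans ?_
        have : a + (1 - Real.cos φ) ≤ a + φ ^ 2 := by nlinarith
        exact mul_le_mul_of_nonneg_left this (by positivity)
      have hl2 : -(16 * ((1 - e) / 2) * (a + φ ^ 2)) ≤ Real.log Γ := by linarith
      have := mul_le_mul_of_nonneg_right hl2 (show 0 ≤ l / 2 by linarith)
      rw [hx]; linarith

end BC

open MeasureTheory Real
namespace BC
variable {k₁ k₂ : ℝ}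

lemma U2 (hk₁ : 0 < k₁) (hk₂ : 0 < k₂) : ∃ C : ℝ, 0 < C ∧ ∀ l t : ℝ, 0 ≤ l →
    l ≤ k₁ + 2 * k₂ → 0 ≤ t →
    J k₁ k₂ ((l - (k₁ + 2 * k₂)) / 2) (Real.exp (-2 * t)) (-1) ≤ C * ((1 + t) / (1 + l * t)) := by
  have hp := Real.pi_pos
  set ρ := k₁ + 2 * k₂ with hρ
  have hρ0 : 0 < ρ := by positivity
  set D := (1 / 2 : ℝ) ^ (-|2 * k₂ - 1|) with hD
  have hD0 : 0 < D := by positivity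
  set E := 1 / (2 * k₂) + 2 / k₁ with hE
  have hE0 : 0 < E := by positivity
  set F := (2:ℝ) ^ (k₁ / 2) * ((1 + k₁ / 2) / k₁ + 3) with hF
  have hF0 : 0 < F := by positivity
  set T := (32:ℝ) ^ ρ with hT
  have hT0 : 0 < T := by positivity
  refine ⟨2 ^ k₁ * (D * T * E * F) * (2 * ρ / k₁), by positivity, fun l t hl hlρ ht => ?_⟩
  set e := Real.exp (-2 * t) with hee
  have he : 0 < e := Real.exp_pos _
  have he1 : e ≤ 1 := by rw [hee, Real.exp_le_one_iff]; linarith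
  set l' := min l (k₁ / 2) with hl'
  have hl'0 : 0 ≤ l' := le_min hl (by positivity)
  have hl'l : l' ≤ l := min_le_left _ _
  have hl'k : l' ≤ k₁ / 2 := min_le_right _ _
  have hl'g : l * k₁ ≤ 2 * ρ * l' := by
    rw [hl']
    rcases le_total l (k₁ / 2) with h | h
    · rw [min_eq_left h]; nlinarith
    · rw [min_eq_right h]; nlinarith
  obtain ⟨ho1, ho2⟩ := outer_frac hk₁ hl'0 hl'k ht
  rw [← hee] at ho1 ho2
  have hgg : ∀ a, (D * (T * ((e + a) ^ (l' - k₁) * E))) * a ^ (k₁ - 1) =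
      (D * T * E) * ((e + a) ^ (l' - k₁) * a ^ (k₁ - 1)) := fun a => by ring
  refine (J_up_of (g := fun a => D * (T * ((e + a) ^ (l' - k₁) * E)))
    (A := (D * T * E) * (F * ((1 + t) / (1 + l' * t)))) hk₁ hk₂ he he1 (by norm_num) ?_ ?_ ?_).trans ?_
  · simp only [hgg]; exact ho1.const_mul _
  · simp only [hgg, intervalIntegral.integral_const_mul]
    exact mul_le_mul_of_nonneg_left ho2 (by positivity)
  · intro a ha
    have ha0 := ha.1
    have hX : 0 < e + a := by positivity
    obtain ⟨hi1, hi2⟩ := int_frac (X := e + a) (s := 2 * k₂) (d := k₁ - l') (L := Real.pi / 2) hX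
      (by positivity) (by linarith) (by positivity)
    have hff : ∀ φ : ℝ, T * (e + a + φ) ^ (-(2 * k₂) - (k₁ - l')) * φ ^ (2 * k₂ - 1) =
      T * ((e + a + φ) ^ (-(2 * k₂) - (k₁ - l')) * φ ^ (2 * k₂ - 1)) := fun φ => by ring
    refine Jh_up_of (g := fun φ => T * (e + a + φ) ^ (-(2 * k₂) - (k₁ - l')))
      hk₂ he he1 ha.1.le ha.2.le (by norm_num) ?_ ?_ ?_
    · simp only [hff]; exact hi1.const_mul _
    · simp only [hff, intervalIntegral.integral_const_mul]
      refine mul_le_mul_of_nonneg_left (hi2.trans ?_) hT0.le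
      rw [neg_sub]
      refine mul_le_mul_of_nonneg_left ?_ (by positivity)
      rw [hE]
      have : 1 / (k₁ - l') ≤ 2 / k₁ := by
        rw [div_le_div_iff₀ (by linarith) hk₁]; linarith
      linarith
    · intro φ hφ
      have hφ0 := hφ.1
      have hc : |-1 * Real.cos φ| ≤ 1 := by
        rw [abs_mul]; simpa using Real.abs_cos_le_one φ
      have hG := G_pos he he1 ha.1.le ha.2.le (abs_le.1 hc).1
      have hG1 := G_le_one he he1 ha.1.le ha.2.le (abs_le.1 hc).2
      have hge := Gm_ge he he1 ha.1.le ha.2.le hφ.1.le hφ.2.le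
      calc G e a (-1 * Real.cos φ) ^ ((l - ρ) / 2) ≤ G e a (-1 * Real.cos φ) ^ ((l' - ρ) / 2) :=
            Real.rpow_le_rpow_of_exponent_ge hG hG1 (by linarith)
        _ ≤ (((e + a + φ) / 32) ^ 2) ^ ((l' - ρ) / 2) :=
            Real.rpow_le_rpow_of_nonpos (by positivity) hge (by linarith)
        _ = (32:ℝ) ^ (ρ - l') * (e + a + φ) ^ (l' - ρ) := by
            rw [← Real.rpow_two, ← Real.rpow_mul (by positivity),
              show 2 * ((l' - ρ) / 2) = l' - ρ by ring, Real.div_rpow (by positivity) (by norm_num),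
              show ρ - l' = -(l' - ρ) by ring, Real.rpow_neg (by norm_num)]
            ring
        _ ≤ T * (e + a + φ) ^ (l' - ρ) := by
            refine mul_le_mul_of_nonneg_right ?_ (by positivity)
            exact Real.rpow_le_rpow_of_exponent_le (by norm_num) (by linarith)
        _ = T * (e + a + φ) ^ (-(2 * k₂) - (k₁ - l')) := by
            congr 2; rw [hρ]; ring
  · have key : (1 + t) / (1 + l' * t) ≤ (2 * ρ / k₁) * ((1 + t) / (1 + l * t)) := by
      rw [← mul_div_assoc, div_le_div_iff₀ (by positivity) (by positivity)]
      have : 1 + l * t ≤ (2 * ρ / k₁) * (1 + l' * t) := by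
        rw [div_mul_eq_mul_div, le_div_iff₀ hk₁]
        have := mul_le_mul_of_nonneg_right hl'g ht
        nlinarith
      have := mul_le_mul_of_nonneg_left this (show 0 ≤ 1 + t by linarith)
      linarith
    calc _ = 2 ^ k₁ * (D * T * E * F) * ((1 + t) / (1 + l' * t)) := by ring
      _ ≤ 2 ^ k₁ * (D * T * E * F) * ((2 * ρ / k₁) * ((1 + t) / (1 + l * t))) := by gcongr
      _ = _ := by ring

lemma Gm_le {e a φ : ℝ} (he : 0 < e) (he1 : e ≤ 1) (ha0 : 0 < a) (ha1 : a ≤ 1) (hea : e ≤ a)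
    (h0 : 0 ≤ φ) (h1' : φ ≤ a) : G e a (-1 * Real.cos φ) ≤ 5 * a ^ 2 := by
  rw [G_low]
  have ho := one_sub_cos_le φ
  have ho0 := Real.cos_le_one φ
  have h1 : e + a * ((1 - e) / 2) ≤ 2 * a := by nlinarith
  have h10 : 0 ≤ e + a * ((1 - e) / 2) := by
    have : 0 ≤ (1 - e) / 2 := by linarith
    positivity
  have h2 : (e + a * ((1 - e) / 2)) ^ 2 ≤ (2 * a) ^ 2 := by gcongr
  have h3 : 1 + -1 * Real.cos φ ≤ a ^ 2 / 2 := by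
    have : φ ^ 2 ≤ a ^ 2 := by
      have := h0
      have := h1'
      gcongr
    linarith
  have h4 : 2 * (1 - a) * ((1 - e) / 2) * ((1 + e) / 2) * (1 + -1 * Real.cos φ) ≤
      1 * (a ^ 2 / 2) := by
    refine mul_le_mul ?_ h3 (by linarith) (by norm_num)
    have h5 : 2 * (1 - a) * ((1 - e) / 2) * ((1 + e) / 2) = (1 - a) * ((1 - e ^ 2) / 2) := by ring
    rw [h5]
    refine mul_le_one₀ (by linarith) (by nlinarith) (by nlinarith)
  have h6 : (2 * a) ^ 2 = 4 * a ^ 2 := by ring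
  linarith [sq_nonneg a]

lemma L2 (hk₁ : 0 < k₁) (hk₂ : 0 < k₂) : ∃ C : ℝ, 0 < C ∧ ∀ l t : ℝ, 0 ≤ l → l ≤ 1 →
    l ≤ k₁ + 2 * k₂ → 1 ≤ t →
    C * ((1 + t) / (1 + l * t)) ≤ J k₁ k₂ ((l - (k₁ + 2 * k₂)) / 2) (Real.exp (-2 * t)) (-1) := by
  have hp := Real.pi_gt_three
  set ρ := k₁ + 2 * k₂ with hρ
  have hρ0 : 0 < ρ := by positivity
  set D := (1 / 2 : ℝ) ^ |2 * k₂ - 1| with hD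
  have hD0 : 0 < D := by positivity
  set K := (5:ℝ) ^ (-ρ / 2) with hK
  have hK0 : 0 < K := by positivity
  set N := D * K / (2 * k₂) * Real.exp (-2) with hN
  have hN0 : 0 < N := by positivity
  refine ⟨(1 / 2 * (1 / 2) ^ (2 * k₂)) * (N * (3 / 10)), by positivity, fun l t hl hl1 hlρ ht => ?_⟩
  set e := Real.exp (-2 * t) with hee
  have he : 0 < e := Real.exp_pos _
  have he1 : e ≤ 1 := by rw [hee, Real.exp_le_one_iff]; linarith
  have hlt : 0 < 1 + l * t := by positivity
  set M := t / (1 + l * t) with hM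
  have hM1 : (1 / 2) * ((1 + t) / (1 + l * t)) ≤ M := by
    rw [hM, ← mul_div_assoc]; gcongr; linarith
  have hM2 : 1 / 2 ≤ M := by
    rw [hM, div_le_div_iff₀ (by norm_num) hlt]; nlinarith
  have hMt : M ≤ t := div_le_self (by linarith) (by nlinarith)
  have hlM : l * M ≤ 1 := by
    rw [hM, ← mul_div_assoc, div_le_one hlt]; linarith
  have hlog2 := Real.log_two_lt_d9
  set η := Real.exp (-2 * M) with hη
  have hη0 : 0 < η := Real.exp_pos _
  have heη : e ≤ η := by rw [hee, hη, Real.exp_le_exp]; linarith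
  have hη2 : η ≤ 1 / 2 := by
    rw [hη, ← Real.le_log_iff_exp_le (by norm_num), one_div, Real.log_inv]; linarith
  set g : ℝ → ℝ := fun a => D * (K * a ^ (l - ρ) * (a ^ (2 * k₂) / (2 * k₂))) with hg
  have hgg : ∀ a, 0 < a → g a * a ^ (k₁ - 1) = D * K / (2 * k₂) * (a ^ l * a⁻¹) := fun a ha => by
    have : a ^ l * a⁻¹ = a ^ (l - ρ) * a ^ (2 * k₂) * a ^ (k₁ - 1) := by
      rw [← Real.rpow_neg_one, ← Real.rpow_add ha, ← Real.rpow_add ha, ← Real.rpow_add ha]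
      congr 1; rw [hρ]; ring
    rw [this]; simp only [hg]; ring
  have hIntg : IntervalIntegrable (fun a => g a * a ^ (k₁ - 1)) volume η (1 / 2) := by
    refine ContinuousOn.intervalIntegrable_of_Icc hη2 ?_
    have hne : ∀ x ∈ Set.Icc η (1 / 2), x ≠ 0 := fun x hx => (lt_of_lt_of_le hη0 hx.1).ne'
    have hc : ∀ m : ℝ, ContinuousOn (fun a : ℝ => a ^ m) (Set.Icc η (1 / 2)) := fun m =>
      ContinuousOn.rpow_const continuousOn_id fun x hx => Or.inl (hne x hx)
    simp only [hg]
    exact (continuousOn_const.mul ((continuousOn_const.mul (hc _)).mul ((hc _).div_const _))).mul (hc _)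
  refine le_trans ?_ (J_low_of (g := g) (α := η) (A := N * ((6 / 10) * M))
    hk₁ hk₂ he he1 (by norm_num) hη0.le hη2 hIntg ?_ ?_)
  · rw [mul_assoc]
    refine mul_le_mul_of_nonneg_left ?_ (by positivity)
    rw [mul_assoc]
    refine mul_le_mul_of_nonneg_left ?_ hN0.le
    linarith
  · have hii : IntervalIntegrable (fun a : ℝ => a⁻¹) volume η (1 / 2) := by
      refine intervalIntegral.intervalIntegrable_inv (fun x hx => ?_) continuousOn_id
      rw [Set.uIcc_of_le hη2] at hx
      exact (lt_of_lt_of_le hη0 hx.1).ne'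
    calc N * ((6 / 10) * M) ≤ N * ∫ a in η..(1 / 2), a⁻¹ := by
          refine mul_le_mul_of_nonneg_left ?_ hN0.le
          rw [integral_inv_of_pos hη0 (by norm_num), Real.log_div (by norm_num) hη0.ne', hη,
            Real.log_exp, one_div, Real.log_inv]
          linarith
      _ = ∫ a in η..(1 / 2), N * a⁻¹ := (intervalIntegral.integral_const_mul _ _).symm
      _ ≤ _ := by
          refine intervalIntegral.integral_mono_on hη2 (hii.const_mul _) hIntg fun a ha => ?_
          have ha0 : 0 < a := lt_of_lt_of_le hη0 ha.1
          rw [hgg a ha0, hN, mul_assoc]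
          refine mul_le_mul_of_nonneg_left ?_ (by positivity)
          refine mul_le_mul_of_nonneg_right ?_ (by positivity)
          refine le_trans ?_ (Real.rpow_le_rpow hη0.le ha.1 hl)
          rw [hη, ← Real.exp_mul, Real.exp_le_exp]; linarith
  · intro a ha
    have ha0 : 0 < a := lt_trans hη0 ha.1
    have ha1 : a ≤ 1 := by linarith [ha.2]
    refine Jh_low_of (g := fun _ => K * a ^ (l - ρ)) (L := a)
      hk₂ he he1 ha0.le ha1 (by norm_num) ha0.le (by linarith [ha.2]) ?_ ?_ ?_
    · exact (intervalIntegral.intervalIntegrable_rpow' (by linarith)).const_mul _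
    · rw [intervalIntegral.integral_const_mul, integral_rpow (Or.inl (by linarith)),
        sub_add_cancel, Real.zero_rpow (by positivity), sub_zero]
    · intro φ hφ
      have hc : |-1 * Real.cos φ| ≤ 1 := by
        rw [abs_mul]; simpa using Real.abs_cos_le_one φ
      have hG := G_pos he he1 ha0.le ha1 (abs_le.1 hc).1
      have hG5 := Gm_le he he1 ha0 ha1 (heη.trans ha.1.le) hφ.1.le hφ.2.le
      calc K * a ^ (l - ρ) ≤ (5:ℝ) ^ ((l - ρ) / 2) * a ^ (l - ρ) := by
            refine mul_le_mul_of_nonneg_right ?_ (by positivity)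
            exact Real.rpow_le_rpow_of_exponent_le (by norm_num) (by linarith)
        _ = (5 * a ^ 2) ^ ((l - ρ) / 2) := by
            rw [Real.mul_rpow (by norm_num) (by positivity), ← Real.rpow_two,
              ← Real.rpow_mul ha0.le, show 2 * ((l - ρ) / 2) = l - ρ by ring]
        _ ≤ _ := Real.rpow_le_rpow_of_nonpos hG hG5 (by linarith)

end BC

open MeasureTheory Real
namespace BC
variable {k₁ k₂ : ℝ}

lemma cmp_small {k l t M : ℝ} (hl : 0 ≤ l) (hM : l ≤ M) (ht : 0 ≤ t) :
    (1 / (1 + M)) ^ |k - 1| * ((1 + t) / (1 + l * t)) ≤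
      (1 + t) / (1 + l * t) ^ k * ((1 + l * (1 + t)) / (1 + l)) ^ (k - 1) ∧
    (1 + t) / (1 + l * t) ^ k * ((1 + l * (1 + t)) / (1 + l)) ^ (k - 1) ≤
      (1 / (1 + M)) ^ (-|k - 1|) * ((1 + t) / (1 + l * t)) := by
  have hM0 : 0 ≤ M := hl.trans hM
  have hlt : 0 < 1 + l * t := by positivity
  obtain ⟨h1, h2⟩ := rpow_cmp (κ := 1 / (1 + M)) (x := (1 + l * (1 + t)) / (1 + l)) (y := 1 + l * t)
    (k - 1) (by positivity) (by rw [div_le_one (by positivity)]; linarith) hlt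
    (by
      rw [one_div_mul_eq_div, div_le_div_iff₀ (by positivity) (by positivity)]
      have : 0 ≤ l * t := by positivity
      refine mul_le_mul ?_ ?_ (by positivity) (by positivity) <;> linarith)
    (by
      rw [div_le_iff₀ (by positivity)]
      have : 0 ≤ l * t * l := by positivity
      nlinarith)
  have he : (1 + t) / (1 + l * t) = (1 + t) / (1 + l * t) ^ k * (1 + l * t) ^ (k - 1) := by
    rw [Real.rpow_sub_one hlt.ne']
    have : (1 + l * t) ^ k ≠ 0 := by positivity
    field_simp
  have hp : 0 ≤ (1 + t) / (1 + l * t) ^ k := by positivity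
  have a1 := mul_le_mul_of_nonneg_left h1 hp
  have a2 := mul_le_mul_of_nonneg_left h2 hp
  rw [he]
  constructor <;> linarith

lemma cmp_large {k l t m : ℝ} (hm : 0 < m) (hl : m ≤ l) (ht : 0 ≤ t) :
    (m / (1 + m)) ^ |k - 1| * ((1 + t) / (1 + l * t)) ^ k ≤
      (1 + t) / (1 + l * t) ^ k * ((1 + l * (1 + t)) / (1 + l)) ^ (k - 1) ∧
    (1 + t) / (1 + l * t) ^ k * ((1 + l * (1 + t)) / (1 + l)) ^ (k - 1) ≤
      (m / (1 + m)) ^ (-|k - 1|) * ((1 + t) / (1 + l * t)) ^ k := by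
  have hl0 : 0 < l := lt_of_lt_of_le hm hl
  have hlt : 0 < 1 + l * t := by positivity
  have ht1 : 0 < 1 + t := by positivity
  obtain ⟨h1, h2⟩ := rpow_cmp (κ := m / (1 + m)) (x := (1 + l * (1 + t)) / (1 + l)) (y := 1 + t)
    (k - 1) (by positivity) (by rw [div_le_one (by positivity)]; linarith) ht1
    (by
      rw [div_mul_eq_mul_div, div_le_div_iff₀ (by positivity) (by positivity)]
      have : m * (1 + t) ≤ l * (1 + t) := by gcongr
      nlinarith)
    (by
      rw [div_le_iff₀ (by positivity)]
      nlinarith)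
  have he : ((1 + t) / (1 + l * t)) ^ k = (1 + t) / (1 + l * t) ^ k * (1 + t) ^ (k - 1) := by
    rw [Real.rpow_sub_one ht1.ne', Real.div_rpow ht1.le hlt.le]
    have : (1 + l * t) ^ k ≠ 0 := by positivity
    field_simp
  have hp : 0 ≤ (1 + t) / (1 + l * t) ^ k := by positivity
  have a1 := mul_le_mul_of_nonneg_left h1 hp
  have a2 := mul_le_mul_of_nonneg_left h2 hp
  rw [he]
  constructor <;> linarith

lemma tau {t : ℝ} (ht : 0 ≤ t) : (1 - Real.exp (-2 * t)) / 2 ≤ t ∧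
    0 ≤ (1 - Real.exp (-2 * t)) / 2 ∧ (1 - Real.exp (-2 * t)) / 2 ≤ 1 / 2 ∧
    t ≤ (1 - Real.exp (-2 * t)) / 2 * (1 + 2 * t) := by
  have h1 := Real.add_one_le_exp (-2 * t)
  have h0 := Real.exp_pos (-2 * t)
  have h2 := Real.add_one_le_exp (2 * t)
  have h3 : Real.exp (-2 * t) * Real.exp (2 * t) = 1 := by rw [← Real.exp_add]; simp
  have h4 : Real.exp (-2 * t) ≤ 1 := by rw [Real.exp_le_one_iff]; linarith
  refine ⟨by linarith, by linarith, by linarith, ?_⟩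
  have := mul_le_mul_of_nonneg_left h2 h0.le
  linarith

lemma J_nonneg {q e s : ℝ} (he : 0 < e) (he1 : e ≤ 1) (hs : |s| ≤ 1) : 0 ≤ J k₁ k₂ q e s := by
  refine intervalIntegral.integral_nonneg zero_le_one fun a ha => ?_
  exact mul_nonneg (V_nonneg ha.1 ha.2) (Jh_nonneg hs he he1 ha.1 ha.2)

set_option maxHeartbeats 2000000 in
lemma upper (hk₁ : 0 < k₁) (hk₂ : 0 < k₂) : ∃ C : ℝ, 0 < C ∧ ∀ l t : ℝ, 0 ≤ l → 0 ≤ t →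
    J k₁ k₂ ((l - (k₁ + 2 * k₂)) / 2) (Real.exp (-2 * t)) 1 +
      J k₁ k₂ ((l - (k₁ + 2 * k₂)) / 2) (Real.exp (-2 * t)) (-1) ≤
    C * ((1 + t) / (1 + l * t) ^ (k₁ + k₂) *
      ((1 + l * (1 + t)) / (1 + l)) ^ (k₁ + k₂ - 1)) := by
  have hpi := Real.pi_pos
  obtain ⟨C1, hC1, h1⟩ := U1 hk₁ hk₂
  obtain ⟨C2, hC2, h2⟩ := U2 hk₁ hk₂
  set ρ := k₁ + 2 * k₂ with hρ
  have hρ0 : 0 < ρ := by positivity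
  set k := k₁ + k₂ with hk
  have hk0 : 0 < k := by positivity
  set W := 64 * (1 + ρ) with hW
  have hW0 : 0 < W := by positivity
  set A := (ρ / (1 + ρ)) ^ |k - 1| with hA
  have hA0 : 0 < A := by positivity
  set B := (1 / (1 + ρ)) ^ |k - 1| with hB
  have hB0 : 0 < B := by positivity
  refine ⟨2 * C1 * W ^ k / A + 2 * C2 / B, by positivity, fun l t hl ht => ?_⟩
  set e := Real.exp (-2 * t) with hee
  have he : 0 < e := Real.exp_pos _
  have he1 : e ≤ 1 := by rw [hee, Real.exp_le_one_iff]; linarith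
  have hR0 : 0 ≤ (1 + t) / (1 + l * t) ^ k * ((1 + l * (1 + t)) / (1 + l)) ^ (k - 1) := by positivity
  set R := (1 + t) / (1 + l * t) ^ k * ((1 + l * (1 + t)) / (1 + l)) ^ (k - 1) with hR
  have hlt : 0 < 1 + l * t := by positivity
  set P := (1 + t) / (1 + l * t) with hP
  have hP0 : 0 < P := by positivity
  have hGm : ∀ a ∈ Set.Ioo (0:ℝ) 1, ∀ φ ∈ Set.Ioo (0:ℝ) (Real.pi / 2),
      0 < G e a (-1 * Real.cos φ) ∧ G e a (-1 * Real.cos φ) ≤ G e a (1 * Real.cos φ) := by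
    intro a ha φ hφ
    have hc0 : 0 ≤ Real.cos φ := Real.cos_nonneg_of_neg_pi_div_two_le_of_le
        (by linarith [hφ.1]) hφ.2.le
    have hc1 := Real.cos_le_one φ
    exact ⟨G_pos he he1 ha.1.le ha.2.le (by linarith), G_mono he he1 ha.2.le (by linarith)⟩
  rw [add_mul]
  have e1 : 0 ≤ 2 * C1 * W ^ k / A * R := by positivity
  have e2 : 0 ≤ 2 * C2 / B * R := by positivity
  rcases le_total ρ l with hlρ | hlρ
  · have hJ : J k₁ k₂ ((l - ρ) / 2) e (-1) ≤ J k₁ k₂ ((l - ρ) / 2) e 1 := by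
      refine J_mono hk₁ hk₂ he he1 (by norm_num) (by norm_num) fun a ha φ hφ => ?_
      obtain ⟨h3, h4⟩ := hGm a ha φ hφ
      exact Real.rpow_le_rpow h3.le h4 (by linarith)
    have hU := h1 ((l - ρ) / 2) e (by linarith) he he1
    obtain ⟨t1, t2, t3, t4⟩ := tau ht
    rw [← hee] at t1 t2 t3 t4
    set τ := (1 - e) / 2 with hτ
    have hx0 : 0 < 1 + (l - ρ) / 2 * τ / 16 := by
      have : 0 ≤ l - ρ := by linarith
      positivity
    have hx : (1 + (l - ρ) / 2 * τ / 16)⁻¹ ≤ W * P := by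
      rw [hP, ← mul_div_assoc W, inv_le_comm₀ hx0 (by positivity), inv_div,
        div_le_iff₀ (by positivity)]
      have s1 : 1 + l * τ ≤ 32 * (1 + ρ) * (1 + (l - ρ) / 2 * τ / 16) := by
        have : 0 ≤ (l - ρ) * τ * ρ := mul_nonneg (mul_nonneg (by linarith) t2) hρ0.le
        nlinarith
      have s2 : 1 + l * t ≤ 2 * (1 + l * τ) * (1 + t) := by
        have := mul_le_mul_of_nonneg_left t4 hl
        have : 0 ≤ l * τ := by positivity
        nlinarith
      have s3 := mul_le_mul_of_nonneg_right s1 (show 0 ≤ 2 * (1 + t) by linarith)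
      rw [hW]; nlinarith
    have hx2 : (1 + (l - ρ) / 2 * τ / 16) ^ (-k) ≤ W ^ k * P ^ k := by
      rw [Real.rpow_neg hx0.le, ← Real.inv_rpow hx0.le, ← Real.mul_rpow hW0.le hP0.le]
      exact Real.rpow_le_rpow (by positivity) hx hk0.le
    have hcmp := (cmp_large (k := k) hρ0 hlρ ht).1
    rw [← hR, ← hP, ← hA] at hcmp
    have : 2 * C1 * W ^ k * P ^ k ≤ 2 * C1 * W ^ k / A * R := by
      rw [div_mul_eq_mul_div, le_div_iff₀ hA0]
      calc _ = 2 * C1 * W ^ k * (A * P ^ k) := by ring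
        _ ≤ _ := by gcongr
    have := mul_le_mul_of_nonneg_left hx2 hC1.le
    linarith
  · have hJ : J k₁ k₂ ((l - ρ) / 2) e 1 ≤ J k₁ k₂ ((l - ρ) / 2) e (-1) := by
      refine J_mono hk₁ hk₂ he he1 (by norm_num) (by norm_num) fun a ha φ hφ => ?_
      obtain ⟨h3, h4⟩ := hGm a ha φ hφ
      exact Real.rpow_le_rpow_of_nonpos h3 h4 (by linarith)
    have hU := h2 l t hl hlρ ht
    have hcmp := (cmp_small (k := k) hl hlρ ht).1
    rw [← hR, ← hP, ← hB] at hcmp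
    have : 2 * C2 * P ≤ 2 * C2 / B * R := by
      rw [div_mul_eq_mul_div, le_div_iff₀ hB0]
      calc _ = 2 * C2 * (B * P) := by ring
        _ ≤ _ := by gcongr
    linarith

set_option maxHeartbeats 2000000 in
lemma lower (hk₁ : 0 < k₁) (hk₂ : 0 < k₂) : ∃ C : ℝ, 0 < C ∧ ∀ l t : ℝ, 0 ≤ l → 0 ≤ t →
    (1 + t) / (1 + l * t) ^ (k₁ + k₂) * ((1 + l * (1 + t)) / (1 + l)) ^ (k₁ + k₂ - 1) ≤
    C * (J k₁ k₂ ((l - (k₁ + 2 * k₂)) / 2) (Real.exp (-2 * t)) 1 +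
      J k₁ k₂ ((l - (k₁ + 2 * k₂)) / 2) (Real.exp (-2 * t)) (-1)) := by
  have hpi := Real.pi_pos
  obtain ⟨c1, hc1, h1⟩ := L1 hk₁ hk₂
  obtain ⟨c2, hc2, h2⟩ := L2 hk₁ hk₂
  set ρ := k₁ + 2 * k₂ with hρ
  have hρ0 : 0 < ρ := by positivity
  set k := k₁ + k₂ with hk
  have hk0 : 0 < k := by positivity
  set m := min 1 ρ with hm
  have hm0 : 0 < m := lt_min one_pos hρ0
  set W := 8 * (2 + 1 / m) with hW
  have hW0 : 0 < W := by positivity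
  set A := (m / (1 + m)) ^ (-|k - 1|) with hA
  have hA0 : 0 < A := by positivity
  set B := (1 / (1 + 1) : ℝ) ^ (-|k - 1|) with hB
  have hB0 : 0 < B := by positivity
  refine ⟨A * W ^ k / c1 + B * 2 * 5 ^ k / c1 + B / c2, by positivity, fun l t hl ht => ?_⟩
  set e := Real.exp (-2 * t) with hee
  have he : 0 < e := Real.exp_pos _
  have he1 : e ≤ 1 := by rw [hee, Real.exp_le_one_iff]; linarith
  have hJ1 := J_nonneg (k₁ := k₁) (k₂ := k₂) (q := (l - ρ) / 2) (s := 1) he he1 (by norm_num)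
  have hJ2 := J_nonneg (k₁ := k₁) (k₂ := k₂) (q := (l - ρ) / 2) (s := -1) he he1 (by norm_num)
  have hL1 := h1 l e hl he he1
  set J1 := J k₁ k₂ ((l - ρ) / 2) e 1 with hJ1d
  set J2 := J k₁ k₂ ((l - ρ) / 2) e (-1) with hJ2d
  set S := J1 + J2 with hS
  have hS0 : 0 ≤ S := by positivity
  set R := (1 + t) / (1 + l * t) ^ k * ((1 + l * (1 + t)) / (1 + l)) ^ (k - 1) with hR
  have hlt : 0 < 1 + l * t := by positivity
  set P := (1 + t) / (1 + l * t) with hP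
  have hP0 : 0 < P := by positivity
  obtain ⟨t1, t2, t3, t4⟩ := tau ht
  rw [← hee] at t1 t2 t3 t4
  set τ := (1 - e) / 2 with hτ
  have hx0 : 0 < 1 + 8 * l * τ := by positivity
  have hq : (1 + 8 * l * τ) ^ (-k) ≤ S / c1 := by
    rw [le_div_iff₀ hc1]; linarith
  have e1 : 0 ≤ A * W ^ k / c1 * S := by positivity
  have e2 : 0 ≤ B * 2 * 5 ^ k / c1 * S := by positivity
  have e3 : 0 ≤ B / c2 * S := by positivity
  rw [add_mul, add_mul]
  rcases le_total m l with hlm | hlm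
  · have hcmp := (cmp_large (k := k) hm0 hlm ht).2
    rw [← hR, ← hP, ← hA] at hcmp
    have hx : P ≤ W * (1 + 8 * l * τ)⁻¹ := by
      rw [hP, ← div_eq_mul_inv, div_le_div_iff₀ hlt hx0]
      have s1 : t ≤ (1 / m) * (l * t) := by
        rw [one_div_mul_eq_div, le_div_iff₀ hm0]
        nlinarith
      have s2 : l * τ ≤ l * t := by gcongr
      have s3 : l * τ * t ≤ l * t * (1 / 2) := by
        have := mul_le_mul_of_nonneg_left t3 (show 0 ≤ l * t by positivity)
        linarith
      have s4 : 0 < 1 / m := by positivity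
      have s5 : 0 ≤ l * t := by positivity
      rw [hW]
      nlinarith
    have hx2 : P ^ k ≤ W ^ k * (1 + 8 * l * τ) ^ (-k) := by
      rw [Real.rpow_neg hx0.le, ← Real.inv_rpow hx0.le, ← Real.mul_rpow hW0.le (by positivity)]
      exact Real.rpow_le_rpow hP0.le hx hk0.le
    have : R ≤ A * W ^ k / c1 * S := by
      calc R ≤ A * P ^ k := hcmp
        _ ≤ A * (W ^ k * (S / c1)) := by
          refine mul_le_mul_of_nonneg_left (hx2.trans ?_) hA0.le
          gcongr
        _ = _ := by ring
    linarith
  · have hl1 : l ≤ 1 := hlm.trans (min_le_left _ _)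
    have hlρ : l ≤ ρ := hlm.trans (min_le_right _ _)
    have hcmp := (cmp_small (k := k) hl hl1 ht).2
    rw [← hR, ← hP, ← hB] at hcmp
    rcases le_total t 1 with ht1 | ht1
    · have hP2 : P ≤ 2 := by
        rw [hP, div_le_iff₀ hlt]; nlinarith [mul_nonneg hl ht]
      have h5 : 1 ≤ 5 ^ k * (1 + 8 * l * τ) ^ (-k) := by
        rw [Real.rpow_neg hx0.le, ← div_eq_mul_inv, one_le_div (by positivity)]
        exact Real.rpow_le_rpow hx0.le (by nlinarith) hk0.le
      have : R ≤ B * 2 * 5 ^ k / c1 * S := by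
        calc R ≤ B * 2 := hcmp.trans (by gcongr)
          _ ≤ B * 2 * (5 ^ k * (S / c1)) := by
            refine le_mul_of_one_le_right (by positivity) (h5.trans ?_)
            gcongr
          _ = _ := by ring
      linarith
    · have hL2 := h2 l t hl hl1 hlρ ht1
      have hP3 : P ≤ S / c2 := by
        rw [le_div_iff₀ hc2]; linarith
      have : R ≤ B / c2 * S := by
        calc R ≤ B * P := hcmp
          _ ≤ B * (S / c2) := by gcongr
          _ = _ := by ring
      linarith

end BC

theorem stmt_11 (k₁ k₂ : ℝ) (hk₁ : 0 < k₁) (hk₂ : 0 < k₂) :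
    ∃ C₁ C₂ : ℝ, 0 < C₁ ∧ 0 < C₂ ∧ ∀ l t : ℝ, 0 ≤ l → 0 ≤ t →
      C₁ * (Real.exp ((l - (k₁ + 2 * k₂)) * t) *
          ((1 + t) / (1 + l * t) ^ (k₁ + k₂)) *
          ((1 + l * (1 + t)) / (1 + l)) ^ (k₁ + k₂ - 1)) ≤ bcIntegral k₁ k₂ l t ∧
      bcIntegral k₁ k₂ l t ≤
        C₂ * (Real.exp ((l - (k₁ + 2 * k₂)) * t) *
          ((1 + t) / (1 + l * t) ^ (k₁ + k₂)) *
          ((1 + l * (1 + t)) / (1 + l)) ^ (k₁ + k₂ - 1)) := by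
  obtain ⟨A, hA, hlow⟩ := BC.lower hk₁ hk₂
  obtain ⟨C, hC, hup⟩ := BC.upper hk₁ hk₂
  refine ⟨1 / A, C, by positivity, hC, fun l t hl ht => ?_⟩
  rw [BC.bc_eq hk₁ hk₂ ht]
  have h1 := hlow l t hl ht
  have h2 := hup l t hl ht
  have he := Real.exp_pos ((l - (k₁ + 2 * k₂)) * t)
  have h3 := mul_le_mul_of_nonneg_left h1 he.le
  have h4 := mul_le_mul_of_nonneg_left h2 he.le
  constructor
  · rw [one_div_mul_eq_div, div_le_iff₀ hA]
    linarith
  · linarith
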